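/- There exist constants C > 0 and Θ₀ ∈ (0,π) such that for every Θ ∈ (0,Θ₀): if β ∈ ℝ and u : ℝ³ → ℝ is continuous, nonnegative, not identically zero, u = 0 on ℝ³∖V, u is harmonic on V, and u(rx) = r^β·u(x) for all r > 0 and x ∈ ℝ³∖{0}, then |β - 1 + Θ²/4| ≤ C·Θ³·|log Θ|. -/

import Mathlib

open MeasureTheory Metric Real Set Filter RealInnerProductSpace
open scoped ENNReal

noncomputable section

/-- Euclidean space ℝ^d. -/
abbrev Ed (d : ℕ) := EuclideanSpace ℝ (Fin d)

/-- The constant `A_{d,α}`. -/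
noncomputable def fracConst (d : ℕ) (α : ℝ) : ℝ :=
  α * 2 ^ (α - 1) * π ^ (-(d : ℝ) / 2) * Real.Gamma (((d : ℝ) + α) / 2) / Real.Gamma (1 - α / 2)

/-- The fractional Laplacian `Δ^{α/2} Φ (x)` exists and equals `L`. -/
def fracLapAt (d : ℕ) (α : ℝ) (Φ : Ed d → ℝ) (x : Ed d) (L : ℝ) : Prop :=
  Filter.Tendsto
    (fun ε : ℝ => fracConst d α *
      ∫ y in {y : Ed d | ε < ‖y - x‖}, (Φ y - Φ x) * ‖y - x‖ ^ (-(d : ℝ) - α))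
    (nhdsWithin 0 (Set.Ioi 0)) (nhds L)

/-- The last coordinate of a vector in ℝ^d. -/
def lastCoord (d : ℕ) (x : Ed d) : ℝ :=
  if h : 0 < d then x ⟨d - 1, Nat.sub_lt h Nat.one_pos⟩ else 0

/-- The unit vector `e_d = (0,…,0,1)`. -/
def eLast (d : ℕ) : Ed d :=
  if h : 0 < d then EuclideanSpace.single ⟨d - 1, Nat.sub_lt h Nat.one_pos⟩ (1 : ℝ) else 0

/-- The right circular cone `Γ_Θ` of angle `Θ`. -/
def cone (d : ℕ) (Θ : ℝ) : Set (Ed d) := {x | ‖x‖ * Real.cos Θ < lastCoord d x}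

/-- The unit sphere `S^{d-1}` in ℝ^d. -/
def unitSphere (d : ℕ) : Set (Ed d) := Metric.sphere (0 : Ed d) 1

/-- The spherical cap `B_Θ`. -/
def capB (d : ℕ) (Θ : ℝ) : Set (Ed d) := {θ | θ ∈ unitSphere d ∧ Real.cos Θ < lastCoord d θ}

/-- The surface measure `σ`: the (d-1)-dimensional Hausdorff measure. -/
noncomputable def sphMeasure (d : ℕ) : Measure (Ed d) := μH[(d : ℝ) - 1]

/-- The kernel `u_λ(t)`. -/
noncomputable def uKernel (d : ℕ) (α lam t : ℝ) : ℝ :=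
  ∫ r in Set.Ioi (0 : ℝ), r ^ ((d : ℝ) + lam - 1) * (r ^ 2 - 2 * r * t + 1) ^ (-((d : ℝ) + α) / 2)

/-- The kernel `u_λ(t)` as a value in `[0,∞]`. -/
noncomputable def uKernelE (d : ℕ) (α lam t : ℝ) : ℝ≥0∞ :=
  ∫⁻ r in Set.Ioi (0 : ℝ),
    ENNReal.ofReal (r ^ ((d : ℝ) + lam - 1) * (r ^ 2 - 2 * r * t + 1) ^ (-((d : ℝ) + α) / 2))

/-- The spherical fractional Laplacian `Δ_S^{α/2} φ (η)` exists and equals `L`. -/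
def sphFracLapAt (d : ℕ) (α : ℝ) (φ : Ed d → ℝ) (η : Ed d) (L : ℝ) : Prop :=
  Filter.Tendsto
    (fun ε : ℝ => fracConst d α *
      ∫ θ in {θ : Ed d | θ ∈ unitSphere d ∧ ⟪θ, η⟫ ≤ Real.cos ε},
        (φ θ - φ η) * uKernel d α 0 ⟪θ, η⟫ ∂(sphMeasure d))
    (nhdsWithin 0 (Set.Ioi 0)) (nhds L)

/-- The integrand of the radial operator `R_λ`. -/
noncomputable def RopIntegrand (d : ℕ) (α lam : ℝ) (φ : Ed d → ℝ) (η θ : Ed d) : ℝ :=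
  φ θ * (uKernel d α lam ⟪θ, η⟫ - uKernel d α 0 ⟪θ, η⟫)

/-- The radial operator `R_λ φ (η)`. -/
noncomputable def Rop (d : ℕ) (α lam : ℝ) (φ : Ed d → ℝ) (η : Ed d) : ℝ :=
  fracConst d α * ∫ θ in unitSphere d, RopIntegrand d α lam φ η θ ∂(sphMeasure d)

/-- The modulus `ω`. -/
noncomputable def omegaFn (α Θ : ℝ) : ℝ :=
  if α < 1 then Θ ^ α else if α = 1 then Θ * |Real.log Θ| else Θ

/-- The Euler beta function. -/
noncomputable def eulerBeta (a b : ℝ) : ℝ := Real.Gamma a * Real.Gamma b / Real.Gamma (a + b)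

/-- The constant `B_{d,α}`. -/
noncomputable def Bconst (d : ℕ) (α : ℝ) : ℝ :=
  Real.Gamma (((d : ℝ) + α) / 2) / (π ^ ((3 : ℝ) / 2) * Real.Gamma (((d : ℝ) - 1 + α) / 2)) *
    Real.sin (π * α / 2) * eulerBeta (1 + α / 2) (((d : ℝ) - 1) / 2)

/-- The constant `C_{d-1,α}`. -/
noncomputable def Cexit (d : ℕ) (α : ℝ) : ℝ :=
  Real.Gamma (((d : ℝ) - 1) / 2) /
    (2 ^ α * Real.Gamma (((d : ℝ) - 1 + α) / 2) * Real.Gamma (1 + α / 2))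

/-- The constant `C̃_{d,α}`. -/
noncomputable def Ctilde (d : ℕ) (α : ℝ) : ℝ :=
  π ^ (((d : ℝ) - 1) / 2) / Real.Gamma (((d : ℝ) - 1) / 2) * Cexit d α *
    eulerBeta (1 + α / 2) (((d : ℝ) - 1) / 2)

/-- The norm `|ỹ|` of the first `d-1` coordinates of `y`. -/
noncomputable def tnorm (d : ℕ) (y : Ed d) : ℝ :=
  Real.sqrt (∑ i : Fin d, if (i : ℕ) < d - 1 then (y i) ^ 2 else 0)

/-- The function `s_ε`. -/
noncomputable def sExit (d : ℕ) (α ε : ℝ) (y : Ed d) : ℝ :=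
  Cexit d α * (max (ε ^ 2 - tnorm d y ^ 2) 0) ^ (α / 2)

/-- The cylinder `Π_ε`. -/
def cylPi (d : ℕ) (ε : ℝ) : Set (Ed d) := {y | tnorm d y < ε}

/-- The hyperplane `F = {y : y_d = 1}`. -/
def hyperF (d : ℕ) : Set (Ed d) := {y | lastCoord d y = 1}

/-- The Riesz kernel `h(y) = |y|^{α-d}`. -/
noncomputable def rieszH (d : ℕ) (α : ℝ) (y : Ed d) : ℝ := ‖y‖ ^ (α - (d : ℝ))

/-- The inversion `T x = x/|x|²`. -/
noncomputable def inversion (d : ℕ) (x : Ed d) : Ed d := (‖x‖ ^ 2)⁻¹ • x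

/-- The shifted cone `V_Θ = Γ_Θ + e_d/2`. -/
def Vcone (d : ℕ) (Θ : ℝ) : Set (Ed d) := {y | y - (1 / 2 : ℝ) • eLast d ∈ cone d Θ}

/-- The spindle `L_ε = T(V_Θ)` with `ε = tan(Θ/2)`, i.e. `Θ = 2 arctan ε`. -/
def Lspindle (d : ℕ) (ε : ℝ) : Set (Ed d) := inversion d '' Vcone d (2 * Real.arctan ε)

/-- The curvilinear projection `y* = T(e_d/2 + (Ty - e_d/2)/(2|Ty - e_d/2|))`. -/
noncomputable def ystar (d : ℕ) (y : Ed d) : Ed d :=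
  inversion d ((1 / 2 : ℝ) • eLast d +
    (2 * ‖inversion d y - (1 / 2 : ℝ) • eLast d‖)⁻¹ • (inversion d y - (1 / 2 : ℝ) • eLast d))

open scoped Classical in
/-- The function `s*_ε`. -/
noncomputable def sStar (d : ℕ) (α ε : ℝ) (y : Ed d) : ℝ :=
  if y ∈ Lspindle d ε then Cexit d α * (max (ε ^ 2 - tnorm d (ystar d y) ^ 2) 0) ^ (α / 2)
  else 0

open scoped Classical in
/-- The function `u = K(h s*_ε)`, i.e. `u(y) = s*_ε(Ty)`, `u(0) = 0`. -/
noncomputable def uFn (d : ℕ) (α ε : ℝ) (y : Ed d) : ℝ :=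
  if y = 0 then 0 else sStar d α ε (inversion d y)

/-- The spherical profile `φ_Θ`. -/
noncomputable def profileFn (d : ℕ) (α Θ : ℝ) (θ : Ed d) : ℝ :=
  2 ^ α * Cexit d α *
    (max (Real.tan (Θ / 2) ^ 2 - ‖eLast d - θ‖ ^ 2 / ‖eLast d + θ‖ ^ 2) 0) ^ (α / 2)

/-- Laplacian on ℝ^d as the sum of pure second partial derivatives. -/
noncomputable def lapE (d : ℕ) (u : Ed d → ℝ) (x : Ed d) : ℝ :=
  ∑ i : Fin d,
    iteratedFDeriv ℝ 2 u x ![EuclideanSpace.single i (1 : ℝ), EuclideanSpace.single i (1 : ℝ)]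

/-- Laplacian on ℝ^d × ℝ as the sum of the d+1 pure second partial derivatives. -/
noncomputable def lapProd (d : ℕ) (U : Ed d × ℝ → ℝ) (p : Ed d × ℝ) : ℝ :=
  (∑ i : Fin d, iteratedFDeriv ℝ 2 U p
      ![(EuclideanSpace.single i (1 : ℝ), (0 : ℝ)), (EuclideanSpace.single i (1 : ℝ), (0 : ℝ))]) +
    iteratedFDeriv ℝ 2 U p ![((0 : Ed d), (1 : ℝ)), ((0 : Ed d), (1 : ℝ))]

/-- The Poisson kernel `P_t(x)` for the upper half-space. -/
noncomputable def poissonK (d : ℕ) (t : ℝ) (x : Ed d) : ℝ :=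
  Real.Gamma (((d : ℝ) + 1) / 2) / π ^ (((d : ℝ) + 1) / 2) * t *
    (‖x‖ ^ 2 + t ^ 2) ^ (-((d : ℝ) + 1) / 2)

end

/-- The complement of a plane slit by a cone, in ℝ³. -/
def slitV (Θ : ℝ) : Set (Ed 3) :=
  {x | x 2 ≠ 0 ∨ Real.sqrt ((x 0) ^ 2 + (x 1) ^ 2) * Real.cos Θ < x 1}

open scoped Topology

/-- `g` is differentiable near `t` with derivative `g₁` at `t`, and `g₂` is its second derivative
at `t`. -/
def HasSecondDerivAt (g : ℝ → ℝ) (g₁ g₂ t : ℝ) : Prop :=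
  ∃ g' : ℝ → ℝ, (∀ᶠ τ in 𝓝 t, HasDerivAt g (g' τ) τ) ∧ g' t = g₁ ∧ HasDerivAt g' g₂ t

namespace HasSecondDerivAt

variable {f g : ℝ → ℝ} {f₁ f₂ g₁ g₂ t : ℝ}

theorem hasDerivAt (hg : HasSecondDerivAt g g₁ g₂ t) : HasDerivAt g g₁ t := by
  obtain ⟨g', h, rfl, -⟩ := hg
  exact h.self_of_nhds

theorem add (hf : HasSecondDerivAt f f₁ f₂ t) (hg : HasSecondDerivAt g g₁ g₂ t) :
    HasSecondDerivAt (fun τ => f τ + g τ) (f₁ + g₁) (f₂ + g₂) t := by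
  obtain ⟨f', hf, rfl, hf'⟩ := hf
  obtain ⟨g', hg, rfl, hg'⟩ := hg
  exact ⟨fun τ => f' τ + g' τ, by filter_upwards [hf, hg] with τ h h' using h.add h', rfl,
    hf'.add hg'⟩

theorem const_mul (hg : HasSecondDerivAt g g₁ g₂ t) (k : ℝ) :
    HasSecondDerivAt (fun τ => k * g τ) (k * g₁) (k * g₂) t := by
  obtain ⟨g', hg, rfl, hg'⟩ := hg
  exact ⟨fun τ => k * g' τ, by filter_upwards [hg] with τ h using h.const_mul k, rfl,
    hg'.const_mul k⟩

theorem mul (hf : HasSecondDerivAt f f₁ f₂ t) (hg : HasSecondDerivAt g g₁ g₂ t) :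
    HasSecondDerivAt (fun τ => f τ * g τ) (f₁ * g t + f t * g₁)
      (f₂ * g t + 2 * f₁ * g₁ + f t * g₂) t := by
  have hft := hf.hasDerivAt
  have hgt := hg.hasDerivAt
  obtain ⟨f', hf, rfl, hf'⟩ := hf
  obtain ⟨g', hg, rfl, hg'⟩ := hg
  refine ⟨fun τ => f' τ * g τ + f τ * g' τ,
    by filter_upwards [hf, hg] with τ h h' using h.mul h', rfl, ?_⟩
  exact ((hf'.mul hgt).add (hft.mul hg')).congr_deriv (by ring)

theorem sub (hf : HasSecondDerivAt f f₁ f₂ t) (hg : HasSecondDerivAt g g₁ g₂ t) :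
    HasSecondDerivAt (fun τ => f τ - g τ) (f₁ - g₁) (f₂ - g₂) t := by
  simpa [sub_eq_add_neg] using hf.add (hg.const_mul (-1))

theorem congr (hf : HasSecondDerivAt f f₁ f₂ t) (h : f =ᶠ[𝓝 t] g) :
    HasSecondDerivAt g f₁ f₂ t := by
  obtain ⟨f', hf, rfl, hf'⟩ := hf
  refine ⟨f', ?_, rfl, hf'⟩
  filter_upwards [hf, h.eventuallyEq_nhds] with τ h h' using h.congr_of_eventuallyEq h'.symm

theorem unique (hf : HasSecondDerivAt f f₁ f₂ t) (hg : HasSecondDerivAt f g₁ g₂ t) :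
    f₁ = g₁ ∧ f₂ = g₂ := by
  obtain ⟨f', hf, rfl, hf'⟩ := hf
  obtain ⟨g', hg, rfl, hg'⟩ := hg
  have h : f' =ᶠ[𝓝 t] g' := by filter_upwards [hf, hg] with τ h h' using h.unique h'
  exact ⟨h.self_of_nhds, hf'.unique (hg'.congr_of_eventuallyEq h)⟩

theorem of_forall {f' : ℝ → ℝ} (h : ∀ τ, HasDerivAt f (f' τ) τ) (h' : HasDerivAt f' f₂ t) :
    HasSecondDerivAt f (f' t) f₂ t :=
  ⟨f', Eventually.of_forall h, rfl, h'⟩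

theorem isLocalMin (hg : HasSecondDerivAt g g₁ g₂ t) (h : IsLocalMin g t) : g₁ = 0 ∧ 0 ≤ g₂ := by
  have hg₁ : g₁ = 0 := h.hasDerivAt_eq_zero hg.hasDerivAt
  refine ⟨hg₁, ?_⟩
  by_contra! hneg
  have hcont := hg.hasDerivAt.continuousAt
  obtain ⟨g', hd, h₁, hd'⟩ := hg
  have hderiv : deriv g =ᶠ[𝓝 t] g' := hd.mono fun τ hτ => hτ.deriv
  have hdd : deriv (deriv g) t = g₂ := by rw [hderiv.deriv_eq, hd'.deriv]
  have hmax : IsLocalMax g t := isLocalMax_of_deriv_deriv_neg (hdd ▸ hneg)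
    (by rw [hderiv.self_of_nhds, h₁, hg₁]) hcont
  have hconst : g =ᶠ[𝓝 t] fun _ => g t := by
    filter_upwards [h, hmax] with τ h h' using le_antisymm h' h
  have : deriv g =ᶠ[𝓝 t] fun _ => 0 := by
    filter_upwards [hconst.eventuallyEq_nhds] with τ hτ
    rw [hτ.deriv_eq, deriv_const]
  rw [this.deriv_eq, deriv_const] at hdd
  exact hneg.ne hdd.symm

end HasSecondDerivAt

/-- The gradient of `u` in coordinates. -/
noncomputable def partialD (u : Ed 3 → ℝ) (x : Ed 3) (i : Fin 3) : ℝ :=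
  fderiv ℝ u x (EuclideanSpace.single i 1)

/-- The Hessian of `u` in coordinates. -/
noncomputable def partialDD (u : Ed 3 → ℝ) (x : Ed 3) (i j : Fin 3) : ℝ :=
  fderiv ℝ (fderiv ℝ u) x (EuclideanSpace.single i 1) (EuclideanSpace.single j 1)

theorem lapE_eq_sum_partialDD (u : Ed 3 → ℝ) (x : Ed 3) :
    lapE 3 u x = ∑ i, partialDD u x i i := by
  simp [lapE, partialDD, iteratedFDeriv_two_apply]

theorem fderiv_eq_sum_partialD (u : Ed 3 → ℝ) (x v : Ed 3) :
    fderiv ℝ u x v = ∑ i, v i * partialD u x i := by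
  conv_lhs => rw [← (EuclideanSpace.basisFun (Fin 3) ℝ).sum_repr v]
  simp [partialD]

theorem fderiv_fderiv_eq_sum_partialDD (u : Ed 3 → ℝ) (x v w : Ed 3) :
    fderiv ℝ (fderiv ℝ u) x v w = ∑ i, ∑ j, v i * w j * partialDD u x i j := by
  conv_lhs => rw [← (EuclideanSpace.basisFun (Fin 3) ℝ).sum_repr v,
    ← (EuclideanSpace.basisFun (Fin 3) ℝ).sum_repr w]
  simp only [map_sum, sum_apply, map_smul, smul_apply,
    EuclideanSpace.basisFun_repr, EuclideanSpace.basisFun_apply, smul_eq_mul, partialDD,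
    Finset.mul_sum]
  rw [Finset.sum_comm]
  exact Finset.sum_congr rfl fun i _ => Finset.sum_congr rfl fun j _ => by ring

theorem HasSecondDerivAt.comp_curve {u : Ed 3 → ℝ} {γ : Fin 3 → ℝ → ℝ} {γ₁ γ₂ : Fin 3 → ℝ}
    {t : ℝ} (hu : ContDiffAt ℝ 2 u (WithLp.toLp 2 fun i => γ i t))
    (hγ : ∀ i, HasSecondDerivAt (γ i) (γ₁ i) (γ₂ i) t) :
    HasSecondDerivAt (fun τ => u (WithLp.toLp 2 fun i => γ i τ))
      (∑ i, γ₁ i * partialD u (WithLp.toLp 2 fun i => γ i t) i)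
      (∑ i, ∑ j, γ₁ i * γ₁ j * partialDD u (WithLp.toLp 2 fun i => γ i t) i j +
        ∑ i, γ₂ i * partialD u (WithLp.toLp 2 fun i => γ i t) i) t := by
  choose γ' h h₁ h₂ using hγ
  have hcurve : ∀ (δ : Fin 3 → ℝ → ℝ) (δ' : Fin 3 → ℝ) (τ : ℝ), (∀ i, HasDerivAt (δ i) (δ' i) τ) →
      HasDerivAt (fun τ => (WithLp.toLp 2 fun i => δ i τ : Ed 3)) (WithLp.toLp 2 δ') τ := by
    intro δ δ' τ hδ
    exact ((EuclideanSpace.equiv (Fin 3) ℝ).symm.toContinuousLinearMap.hasFDerivAt).comp_hasDerivAt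
      τ (hasDerivAt_pi.2 hδ)
  have hev : ∀ᶠ τ in 𝓝 t, HasDerivAt (fun τ => (WithLp.toLp 2 fun i => γ i τ : Ed 3))
      (WithLp.toLp 2 fun i => γ' i τ) τ := by
    filter_upwards [eventually_all.2 h] with τ hτ using hcurve _ _ _ hτ
  have hγ't : (fun i => γ' i t) = γ₁ := funext h₁
  have hcont := hev.self_of_nhds.continuousAt
  have hdiff : ∀ᶠ y in 𝓝 (WithLp.toLp 2 fun i => γ i t : Ed 3), DifferentiableAt ℝ u y :=
    (hu.eventually (by simp)).mono fun y hy => hy.differentiableAt (by simp)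
  have hfd : DifferentiableAt ℝ (fderiv ℝ u) (WithLp.toLp 2 fun i => γ i t) :=
    (hu.fderiv_right (m := 1) (by norm_num)).differentiableAt (by simp)
  refine ⟨fun τ => fderiv ℝ u (WithLp.toLp 2 fun i => γ i τ) (WithLp.toLp 2 fun i => γ' i τ),
    ?_, ?_, ?_⟩
  · filter_upwards [hev, hcont.eventually hdiff] with τ h h'
    exact h'.hasFDerivAt.comp_hasDerivAt τ h
  · simp only [fderiv_eq_sum_partialD, h₁]
  · have h1 := hfd.hasFDerivAt.comp_hasDerivAt t hev.self_of_nhds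
    have h2 := h1.clm_apply (hcurve _ _ _ h₂)
    refine h2.congr_deriv ?_
    simp only [hγ't, fderiv_fderiv_eq_sum_partialDD, fderiv_eq_sum_partialD, Function.comp_apply]

/-- Sphero-conal coordinates on the unit sphere, with parameters `s + c = 1`. -/
noncomputable def conalX (s c φ ψ : ℝ) : Fin 3 → ℝ :=
  ![cos φ * √(1 - c * cos ψ ^ 2), cos ψ * √(1 - s * cos φ ^ 2), sin φ * sin ψ]

theorem HasSecondDerivAt.sqrt {g : ℝ → ℝ} {g₁ g₂ t : ℝ} (hg : HasSecondDerivAt g g₁ g₂ t)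
    (hpos : 0 < g t) :
    HasSecondDerivAt (fun τ => √(g τ)) (g₁ / (2 * √(g t)))
      (g₂ / (2 * √(g t)) - g₁ ^ 2 / (4 * g t * √(g t))) t := by
  have hcont := hg.hasDerivAt.continuousAt
  have hgt := hg.hasDerivAt
  obtain ⟨g', h, rfl, h'⟩ := hg
  refine ⟨fun τ => g' τ / (2 * √(g τ)), ?_, rfl, ?_⟩
  · filter_upwards [h, hcont.eventually (lt_mem_nhds hpos)] with τ h hτ
    exact h.sqrt hτ.ne'
  · have hs : 0 < √(g t) := Real.sqrt_pos.2 hpos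
    refine (h'.div ((hgt.sqrt hpos.ne').const_mul 2) (by positivity)).congr_deriv ?_
    have e : √(g t) ^ 2 = g t := Real.sq_sqrt hpos.le
    rw [← sub_eq_zero]
    field_simp
    linear_combination (4 * g' t ^ 2) * e

theorem hasSecondDerivAt_cos (t : ℝ) : HasSecondDerivAt cos (-sin t) (-cos t) t :=
  .of_forall hasDerivAt_cos (hasDerivAt_sin t).neg

theorem hasSecondDerivAt_sin (t : ℝ) : HasSecondDerivAt sin (cos t) (-sin t) t :=
  .of_forall hasDerivAt_sin (hasDerivAt_cos t)

theorem hasSecondDerivAt_const (k t : ℝ) : HasSecondDerivAt (fun _ => k) 0 0 t :=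
  .of_forall (f' := fun _ => 0) (fun τ => hasDerivAt_const τ k) (hasDerivAt_const t 0)

theorem hasSecondDerivAt_id (t : ℝ) : HasSecondDerivAt (fun τ => τ) 1 0 t :=
  .of_forall (f' := fun _ => 1) (fun τ => hasDerivAt_id τ) (hasDerivAt_const t 1)

theorem HasSecondDerivAt.congr_values {g : ℝ → ℝ} {g₁ g₂ h₁ h₂ t : ℝ}
    (hg : HasSecondDerivAt g g₁ g₂ t) (e₁ : g₁ = h₁) (e₂ : g₂ = h₂) :
    HasSecondDerivAt g h₁ h₂ t := e₁ ▸ e₂ ▸ hg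

theorem hasSecondDerivAt_sqrt_conal {s : ℝ} (t : ℝ) (h : 0 < 1 - s * cos t ^ 2) :
    ∃ k₁ k₂, HasSecondDerivAt (fun τ => √(1 - s * cos τ ^ 2)) k₁ k₂ t ∧
      √(1 - s * cos t ^ 2) * k₁ = s * sin t * cos t ∧
      √(1 - s * cos t ^ 2) * k₂ + k₁ ^ 2 = s * (cos t ^ 2 - sin t ^ 2) := by
  have hg := (hasSecondDerivAt_const 1 t).sub
    (((hasSecondDerivAt_cos t).mul (hasSecondDerivAt_cos t)).const_mul s)
  have hg' : HasSecondDerivAt (fun τ => 1 - s * cos τ ^ 2) (2 * s * sin t * cos t)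
      (2 * s * (cos t ^ 2 - sin t ^ 2)) t := by
    simpa only [← sq] using (hg.congr_values (by ring) (by ring))
  have hs : 0 < √(1 - s * cos t ^ 2) := Real.sqrt_pos.2 h
  refine ⟨_, _, hg'.sqrt h, ?_, ?_⟩
  · field_simp
  · have e : √(1 - s * cos t ^ 2) ^ 2 = 1 - s * cos t ^ 2 := Real.sq_sqrt h.le
    field_simp
    rw [e]
    ring

/-- Euler's relations for a homogeneous function. -/
theorem euler_relations {u : Ed 3 → ℝ} {β : ℝ} {x : Fin 3 → ℝ}
    (hu : ContDiffAt ℝ 2 u (WithLp.toLp 2 x))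
    (hx : ∀ r : ℝ, 0 < r → u (r • WithLp.toLp 2 x) = r ^ β * u (WithLp.toLp 2 x)) :
    ∑ i, x i * partialD u (WithLp.toLp 2 x) i = β * u (WithLp.toLp 2 x) ∧
    ∑ i, ∑ j, x i * x j * partialDD u (WithLp.toLp 2 x) i j =
      β * (β - 1) * u (WithLp.toLp 2 x) := by
  have h1 : ∀ i, HasSecondDerivAt (fun t => x i * t) (x i) 0 1 := fun i =>
    ((hasSecondDerivAt_id 1).const_mul (x i)).congr_values (by ring) (by ring)
  have e1 : (fun i => x i * 1) = x := by simp
  have h2 := HasSecondDerivAt.comp_curve (u := u) (by simpa [e1] using hu) h1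
  have h3 : HasSecondDerivAt (fun t : ℝ => t ^ β) β (β * (β - 1)) 1 := by
    refine ⟨fun t => β * t ^ (β - 1), ?_, by simp, ?_⟩
    · filter_upwards [lt_mem_nhds one_pos] with t ht
      exact Real.hasDerivAt_rpow_const (Or.inl ht.ne')
    · simpa using
        (Real.hasDerivAt_rpow_const (x := (1 : ℝ)) (p := β - 1) (Or.inl one_ne_zero)).const_mul β
  have h4 := (h3.const_mul (u (WithLp.toLp 2 x))).congr
    (g := fun t => u (WithLp.toLp 2 fun i => x i * t)) (by
      filter_upwards [lt_mem_nhds one_pos] with t ht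
      rw [mul_comm, ← hx t ht]
      congr 1
      ext i
      simp [mul_comm])
  obtain ⟨h5, h6⟩ := h2.unique h4
  simp only [e1] at h5 h6
  constructor
  · linarith
  · simp only [zero_mul, Finset.sum_const_zero, add_zero] at h6
    linarith

/-- The eigenvalue equation satisfied by a homogeneous harmonic function in sphero-conal
coordinates. -/
theorem conal_equation {u : Ed 3 → ℝ} {β s c φ ψ : ℝ} (hsc : s + c = 1)
    (hs : 0 < 1 - s * cos φ ^ 2) (hc : 0 < 1 - c * cos ψ ^ 2)
    (hu : ContDiffAt ℝ 2 u (WithLp.toLp 2 (conalX s c φ ψ)))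
    (hlap : lapE 3 u (WithLp.toLp 2 (conalX s c φ ψ)) = 0)
    (hhom : ∀ r : ℝ, 0 < r → u (r • WithLp.toLp 2 (conalX s c φ ψ)) =
      r ^ β * u (WithLp.toLp 2 (conalX s c φ ψ))) :
    ∃ a₁ a₂ b₁ b₂, HasSecondDerivAt (fun t => u (WithLp.toLp 2 (conalX s c t ψ))) a₁ a₂ φ ∧
      HasSecondDerivAt (fun t => u (WithLp.toLp 2 (conalX s c φ t))) b₁ b₂ ψ ∧
      (1 - s * cos φ ^ 2) * a₂ + s * sin φ * cos φ * a₁ +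
        ((1 - c * cos ψ ^ 2) * b₂ + c * sin ψ * cos ψ * b₁) =
      -(β * (β + 1)) * (c * sin ψ ^ 2 + s * sin φ ^ 2) *
        u (WithLp.toLp 2 (conalX s c φ ψ)) := by
  obtain ⟨h₁, h₂, hh, hh1, hh2⟩ := hasSecondDerivAt_sqrt_conal φ hs
  obtain ⟨p₁, p₂, hp, hp1, hp2⟩ := hasSecondDerivAt_sqrt_conal ψ hc
  have A : ∀ i, HasSecondDerivAt (fun t => conalX s c t ψ i)
      (![-sin φ * √(1 - c * cos ψ ^ 2), cos ψ * h₁, cos φ * sin ψ] i)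
      (![-cos φ * √(1 - c * cos ψ ^ 2), cos ψ * h₂, -sin φ * sin ψ] i) φ := by
    intro i
    fin_cases i
    · exact ((hasSecondDerivAt_cos φ).mul (hasSecondDerivAt_const _ φ)).congr_values
        (by simp) (by simp)
    · exact hh.const_mul _
    · exact ((hasSecondDerivAt_sin φ).mul (hasSecondDerivAt_const _ φ)).congr_values
        (by simp) (by simp)
  have B : ∀ i, HasSecondDerivAt (fun t => conalX s c φ t i)
      (![cos φ * p₁, -sin ψ * √(1 - s * cos φ ^ 2), sin φ * cos ψ] i)
      (![cos φ * p₂, -cos ψ * √(1 - s * cos φ ^ 2), sin φ * -sin ψ] i) ψ := by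
    intro i
    fin_cases i
    · exact hp.const_mul _
    · exact ((hasSecondDerivAt_cos ψ).mul (hasSecondDerivAt_const _ ψ)).congr_values
        (by simp) (by simp)
    · exact (hasSecondDerivAt_sin ψ).const_mul _
  have A' := HasSecondDerivAt.comp_curve (u := u) hu A
  have B' := HasSecondDerivAt.comp_curve (u := u) hu B
  refine ⟨_, _, _, _, A', B', ?_⟩
  obtain ⟨E1, E2⟩ := euler_relations hu hhom
  rw [lapE_eq_sum_partialDD] at hlap
  have eh : √(1 - s * cos φ ^ 2) ^ 2 = 1 - s * cos φ ^ 2 := Real.sq_sqrt hs.le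
  have ep : √(1 - c * cos ψ ^ 2) ^ 2 = 1 - c * cos ψ ^ 2 := Real.sq_sqrt hc.le
  have tφ := sin_sq_add_cos_sq φ
  have tψ := sin_sq_add_cos_sq ψ
  change ∑ i, conalX s c φ ψ i * partialD u (WithLp.toLp 2 (conalX s c φ ψ)) i = _ at E1
  generalize u (WithLp.toLp 2 (conalX s c φ ψ)) = U at *
  change _ + _ * (∑ i, _ * partialD u (WithLp.toLp 2 (conalX s c φ ψ)) i) + _ = _
  generalize partialD u (WithLp.toLp 2 (conalX s c φ ψ)) = D at *
  generalize partialDD u (WithLp.toLp 2 (conalX s c φ ψ)) = DD at *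
  simp only [conalX, Fin.sum_univ_three, Matrix.cons_val_zero, Matrix.cons_val_one,
    Matrix.cons_val] at E1 E2 hlap ⊢
  generalize √(1 - s * cos φ ^ 2) = h at *
  generalize √(1 - c * cos ψ ^ 2) = p at *
  generalize cos φ = a at *
  generalize sin φ = b at *
  generalize cos ψ = x at *
  generalize sin ψ = σ at *
  rw [← eh, ← ep]
  obtain rfl : c = 1 - s := by linarith
  have m00 : h ^ 2 * (-b * p) ^ 2 + p ^ 2 * (a * p₁) ^ 2 =
      ((1 - s) * σ ^ 2 + s * b ^ 2) * (1 - (a * p) ^ 2) := by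
    linear_combination a ^ 2 * (p * p₁ + (1 - s) * σ * x) * hp1 + b ^ 2 * p ^ 2 * eh + (b ^ 2 *
      (1 - s * a ^ 2) + ((1 - s) * σ ^ 2 + s * b ^ 2) * a ^ 2) * ep + ((1 - s * a ^ 2) * (1 - (1 -
      s) * x ^ 2) - s * (1 - a ^ 2 * (1 - (1 - s) * x ^ 2))) * tφ + (a ^ 2 * (1 - s) ^ 2 * x ^ 2 -
      (1 - s) * (1 - a ^ 2 * (1 - (1 - s) * x ^ 2))) * tψ
  have m11 : h ^ 2 * (x * h₁) ^ 2 + p ^ 2 * (-σ * h) ^ 2 =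
      ((1 - s) * σ ^ 2 + s * b ^ 2) * (1 - (x * h) ^ 2) := by
    linear_combination x ^ 2 * (h * h₁ + s * b * a) * hh1 + σ ^ 2 * h ^ 2 * ep + (σ ^ 2 * (1 -
      (1 - s) * x ^ 2) + ((1 - s) * σ ^ 2 + s * b ^ 2) * x ^ 2) * eh + (x ^ 2 * s ^ 2 * a ^ 2 - s
      * (1 - x ^ 2 * (1 - s * a ^ 2))) * tφ + ((1 - (1 - s) * x ^ 2) * (1 - s * a ^ 2) - (1 - s) *
      (1 - x ^ 2 * (1 - s * a ^ 2))) * tψ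
  have m22 : h ^ 2 * (a * σ) ^ 2 + p ^ 2 * (b * x) ^ 2 =
      ((1 - s) * σ ^ 2 + s * b ^ 2) * (1 - (b * σ) ^ 2) := by
    linear_combination a ^ 2 * σ ^ 2 * eh + b ^ 2 * x ^ 2 * ep + ((1 - (1 - s) * x ^ 2) * x ^ 2
      + (1 - s) * σ ^ 4 - s + s * σ ^ 2 * (b ^ 2 + (1 - a ^ 2))) * tφ + ((1 - s * a ^ 2) * a ^ 2 -
      (1 - s) + s * (1 - a ^ 2) ^ 2 + (1 - s) * (1 - a ^ 2) * (σ ^ 2 + (1 - x ^ 2))) * tψ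
  have m01 : h ^ 2 * ((-b * p) * (x * h₁)) + p ^ 2 * ((a * p₁) * (-σ * h)) =
      ((1 - s) * σ ^ 2 + s * b ^ 2) * (- ((a * p) * (x * h))) := by
    linear_combination -(b * p * x * h) * hh1 - a * σ * h * p * hp1
  have m02 : h ^ 2 * ((-b * p) * (a * σ)) + p ^ 2 * ((a * p₁) * (b * x)) =
      ((1 - s) * σ ^ 2 + s * b ^ 2) * (- ((a * p) * (b * σ))) := by
    linear_combination p * a * b * x * hp1 - b * p * a * σ * eh + a * b * p * σ * s * tφ + a * b
      * p * σ * (1 - s) * tψ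
  have m12 : h ^ 2 * ((x * h₁) * (a * σ)) + p ^ 2 * ((-σ * h) * (b * x)) =
      ((1 - s) * σ ^ 2 + s * b ^ 2) * (- ((x * h) * (b * σ))) := by
    linear_combination h * x * a * σ * hh1 - σ * h * b * x * ep + x * h * b * σ * s * tφ + x * h
      * b * σ * (1 - s) * tψ
  have l0 : h ^ 2 * (-a * p) + s * b * a * (-b * p) + p ^ 2 * (a * p₂) +
      (1 - s) * σ * x * (a * p₁) = -2 * ((1 - s) * σ ^ 2 + s * b ^ 2) * (a * p) := by
    grind
  have l1 : h ^ 2 * (x * h₂) + s * b * a * (x * h₁) + p ^ 2 * (-x * h) +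
      (1 - s) * σ * x * (-σ * h) = -2 * ((1 - s) * σ ^ 2 + s * b ^ 2) * (x * h) := by
    grind
  have l2 : h ^ 2 * (-b * σ) + s * b * a * (a * σ) + p ^ 2 * (b * -σ) +
      (1 - s) * σ * x * (b * x) = -2 * ((1 - s) * σ ^ 2 + s * b ^ 2) * (b * σ) := by
    grind
  linear_combination DD 0 0 * m00 + DD 1 1 * m11 + DD 2 2 * m22 + (DD 0 1 + DD 1 0) * m01 +
    (DD 0 2 + DD 2 0) * m02 + (DD 1 2 + DD 2 1) * m12 + D 0 * l0 + D 1 * l1 + D 2 * l2 +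
    ((1 - s) * σ ^ 2 + s * b ^ 2) * (hlap - E2 - 2 * E1)

theorem continuous_conalX (s c : ℝ) :
    Continuous fun z : ℝ × ℝ => (WithLp.toLp 2 (conalX s c z.1 z.2) : Ed 3) := by
  refine (EuclideanSpace.equiv (Fin 3) ℝ).symm.continuous.comp (continuous_pi fun i => ?_)
  fin_cases i <;> simp [conalX] <;> fun_prop

theorem norm_sq_conalX {s c φ ψ : ℝ} (hsc : s + c = 1) (hs : 0 ≤ 1 - s * cos φ ^ 2)
    (hc : 0 ≤ 1 - c * cos ψ ^ 2) :
    (cos φ * √(1 - c * cos ψ ^ 2)) ^ 2 + (cos ψ * √(1 - s * cos φ ^ 2)) ^ 2 +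
      (sin φ * sin ψ) ^ 2 = 1 := by
  rw [mul_pow, mul_pow, Real.sq_sqrt hs, Real.sq_sqrt hc, mul_pow]
  have tφ := sin_sq_add_cos_sq φ
  have tψ := sin_sq_add_cos_sq ψ
  linear_combination sin ψ ^ 2 * tφ + tψ - cos φ ^ 2 * tψ - cos φ ^ 2 * cos ψ ^ 2 * hsc

theorem conalX_mem_slitV {Θ φ ψ : ℝ} (hΘ : 0 < cos Θ) (hs : sin Θ ≠ 0)
    (hφ : φ ∈ Ioo 0 π) (hψ : ψ ∈ Ioo (-π) π) :
    WithLp.toLp 2 (conalX (sin Θ ^ 2) (cos Θ ^ 2) φ ψ) ∈ slitV Θ := by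
  have hsφ : 0 < sin φ := sin_pos_of_mem_Ioo hφ
  by_cases h : sin ψ = 0
  · right
    have hψ0 : ψ = 0 := (sin_eq_zero_iff_of_lt_of_lt hψ.1 hψ.2).1 h
    have e1 : 1 - sin Θ ^ 2 * cos φ ^ 2 = cos Θ ^ 2 + sin Θ ^ 2 * sin φ ^ 2 := by
      linear_combination -sin_sq_add_cos_sq Θ - sin Θ ^ 2 * sin_sq_add_cos_sq φ
    have hpos : 0 < sin Θ ^ 2 * sin φ ^ 2 := by positivity
    have e2 := norm_sq_conalX (s := sin Θ ^ 2) (c := cos Θ ^ 2) (φ := φ) (ψ := ψ)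
      (sin_sq_add_cos_sq Θ) (by rw [e1]; positivity)
      (by rw [hψ0, cos_zero]; nlinarith [sin_sq_add_cos_sq Θ, sq_nonneg (sin Θ)])
    rw [h, mul_zero, zero_pow two_ne_zero, add_zero] at e2
    simp only [conalX, Matrix.cons_val_zero, Matrix.cons_val_one]
    rw [e2, hψ0, cos_zero, Real.sqrt_one, one_mul, one_mul, e1]
    exact Real.lt_sqrt_of_sq_lt (by linarith)
  · left
    simpa [conalX] using ⟨hsφ.ne', h⟩

theorem conalX_notMem_slitV {Θ φ ψ : ℝ} (hΘ : 0 < cos Θ)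
    (h : sin φ = 0 ∨ cos ψ = -1) :
    WithLp.toLp 2 (conalX (sin Θ ^ 2) (cos Θ ^ 2) φ ψ) ∉ slitV Θ := by
  have tφ := sin_sq_add_cos_sq φ
  have tψ := sin_sq_add_cos_sq ψ
  have tΘ := sin_sq_add_cos_sq Θ
  have h2 : sin φ * sin ψ = 0 := by
    rcases h with h | h
    · simp [h]
    · rw [h] at tψ
      simp [show sin ψ = 0 by nlinarith]
  have e2 := norm_sq_conalX (s := sin Θ ^ 2) (c := cos Θ ^ 2) (φ := φ) (ψ := ψ)
      tΘ (by nlinarith [sq_nonneg (sin Θ * sin φ), sq_nonneg (cos Θ)])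
        (by nlinarith [sq_nonneg (cos Θ * sin ψ), sq_nonneg (sin Θ)])
  rw [h2, zero_pow two_ne_zero, add_zero] at e2
  simp only [slitV, mem_ofPred_eq, not_or, not_lt, conalX, Matrix.cons_val_zero,
    Matrix.cons_val_one, Matrix.cons_val]
  refine ⟨not_not.2 h2, ?_⟩
  rw [e2, Real.sqrt_one, one_mul]
  rcases h with h | h
  · have : 1 - sin Θ ^ 2 * cos φ ^ 2 = cos Θ ^ 2 := by
      rw [h] at tφ
      linear_combination -tΘ - sin Θ ^ 2 * tφ
    rw [this, Real.sqrt_sq hΘ.le]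
    nlinarith [cos_le_one ψ]
  · rw [h]
    nlinarith [Real.sqrt_nonneg (1 - sin Θ ^ 2 * cos φ ^ 2)]

theorem isOpen_slitV (Θ : ℝ) : IsOpen (slitV Θ) := by
  have h : ∀ i : Fin 3, Continuous fun x : Ed 3 => x i := fun i => by fun_prop
  refine IsOpen.union ?_ ?_
  · exact isOpen_ne_fun (h 2) continuous_const
  · exact isOpen_lt (by fun_prop) (h 1)

theorem isPreconnected_slitV {Θ : ℝ} (h0 : 0 ≤ cos Θ) (h1 : cos Θ < 1) :
    IsPreconnected (slitV Θ) := by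
  have hstar : StarConvex ℝ (EuclideanSpace.single 1 1 : Ed 3) (slitV Θ) := by
    intro y hy a b ha hb hab
    rcases hb.eq_or_lt with rfl | hb
    · right
      obtain rfl : a = 1 := by linarith
      simpa using h1
    · rcases hy with hy | hy
      · left
        simpa using ⟨hb.ne', hy⟩
      · right
        simp only [PiLp.add_apply, PiLp.smul_apply, smul_eq_mul]
        simp only [EuclideanSpace.single, PiLp.single_apply]
        norm_num
        have hn : √((b * y 0) ^ 2 + (a + b * y 1) ^ 2) ≤ a + b * √(y 0 ^ 2 + y 1 ^ 2) := by
          have hS := Real.sqrt_nonneg (y 0 ^ 2 + y 1 ^ 2)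
          have hS2 : √(y 0 ^ 2 + y 1 ^ 2) ^ 2 = y 0 ^ 2 + y 1 ^ 2 := Real.sq_sqrt (by positivity)
          have hS1 : y 1 ≤ √(y 0 ^ 2 + y 1 ^ 2) := Real.le_sqrt_of_sq_le (by nlinarith)
          rw [Real.sqrt_le_left (by positivity)]
          have : a * b * y 1 ≤ a * b * √(y 0 ^ 2 + y 1 ^ 2) := by gcongr
          have e := congrArg (b ^ 2 * ·) hS2
          simp only at e
          linarith [show (b * y 0) ^ 2 + (a + b * y 1) ^ 2 =
            a ^ 2 + 2 * (a * b * y 1) + b ^ 2 * (y 0 ^ 2 + y 1 ^ 2) by ring,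
            show (a + b * √(y 0 ^ 2 + y 1 ^ 2)) ^ 2 = a ^ 2 +
              2 * (a * b * √(y 0 ^ 2 + y 1 ^ 2)) + b ^ 2 * √(y 0 ^ 2 + y 1 ^ 2) ^ 2 by ring]
        calc _ ≤ (a + b * √(y 0 ^ 2 + y 1 ^ 2)) * cos Θ := by gcongr
          _ < a + b * y 1 := by nlinarith
  exact (hstar.isPathConnected (Or.inr (by simpa using h1))).isConnected.isPreconnected

theorem HasSecondDerivAt.inv {g : ℝ → ℝ} {g₁ g₂ t : ℝ} (hg : HasSecondDerivAt g g₁ g₂ t)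
    (h0 : g t ≠ 0) :
    HasSecondDerivAt (fun τ => (g τ)⁻¹) (-g₁ / g t ^ 2)
      (-g₂ / g t ^ 2 + 2 * g₁ ^ 2 / g t ^ 3) t := by
  have hgt := hg.hasDerivAt
  obtain ⟨g', h, rfl, h'⟩ := hg
  refine ⟨fun τ => -g' τ / g τ ^ 2, ?_, rfl, ?_⟩
  · filter_upwards [h, hgt.continuousAt.eventually_ne h0] with τ h hτ
    exact h.inv hτ
  · refine (h'.neg.div (hgt.pow 2) (pow_ne_zero 2 h0)).congr_deriv ?_
    simp only [Pi.neg_apply, Pi.pow_apply]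
    field_simp
    ring

/-- The squared distance, in coordinates. -/
noncomputable def sqDist (y x : Ed 3) : ℝ := ∑ i, (x i - y i) ^ 2

theorem sqDist_eq (y x : Ed 3) : sqDist y x = dist x y ^ 2 := by
  rw [dist_eq_norm, EuclideanSpace.real_norm_sq_eq]
  simp [sqDist]

/-- Second derivatives along coordinate lines of `u - ε |x - y|⁻²`. -/
theorem hasSecondDerivAt_barrier {u : Ed 3 → ℝ} {y z : Ed 3} (hu : ContDiffAt ℝ 2 u z)
    (hz : sqDist y z ≠ 0) (ε : ℝ) (i : Fin 3) :
    HasSecondDerivAt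
      (fun t => u (z + t • EuclideanSpace.single i 1) -
        ε * (sqDist y (z + t • EuclideanSpace.single i 1))⁻¹)
      (partialD u z i - ε * (-(2 * (z i - y i)) / sqDist y z ^ 2))
      (partialDD u z i i -
        ε * (-2 / sqDist y z ^ 2 + 8 * (z i - y i) ^ 2 / sqDist y z ^ 3)) 0 := by
  have hcoord : ∀ j, HasSecondDerivAt (fun t => z j + (if j = i then 1 else 0) * t)
      (if j = i then 1 else 0) 0 0 := fun j =>
    ((hasSecondDerivAt_const (z j) 0).add ((hasSecondDerivAt_id 0).const_mul _)).congr_values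
      (by ring) (by ring)
  have e0 : (WithLp.toLp 2 fun j => z j + (if j = i then 1 else 0) * (0 : ℝ) : Ed 3) = z := by
    ext j; simp
  have e : ∀ t : ℝ, (WithLp.toLp 2 fun j => z j + (if j = i then 1 else 0) * t : Ed 3) =
      z + t • EuclideanSpace.single i 1 := by
    intro t
    ext j
    by_cases h : j = i <;> simp [h]
  have h1 := HasSecondDerivAt.comp_curve (u := u) (by rwa [e0]) hcoord
  rw [e0] at h1
  simp only [e] at h1
  have h2 : HasSecondDerivAt (fun t => sqDist y (z + t • EuclideanSpace.single i 1))
      (2 * (z i - y i)) 2 0 := by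
    have h3 := ((hasSecondDerivAt_const (sqDist y z) 0).add
      ((hasSecondDerivAt_id 0).const_mul (2 * (z i - y i)))).add
        ((hasSecondDerivAt_id 0).mul (hasSecondDerivAt_id 0))
    refine (h3.congr_values (by ring) (by ring)).congr (Eventually.of_forall fun t => ?_)
    simp only [sqDist, ← e]
    fin_cases i <;> simp [Fin.sum_univ_three] <;> ring
  have h4 := h1.sub ((h2.inv (by simpa using hz)).const_mul ε)
  refine h4.congr_values ?_ ?_
  · simp
  · simp
    exact Or.inl (by ring)

theorem pos_on_ball_of_harmonic {u : Ed 3 → ℝ} {y : Ed 3} {R : ℝ} (hcont : Continuous u)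
    (hnonneg : ∀ x, 0 ≤ u x) (hdiff : ∀ x ∈ ball y R, ContDiffAt ℝ 2 u x)
    (hlap : ∀ x ∈ ball y R, lapE 3 u x = 0) (hy : 0 < u y) {x : Ed 3} (hx : x ∈ ball y R) :
    0 < u x := by
  have hR : 0 < R := (dist_nonneg).trans_lt hx
  obtain ⟨ρ', hρ', hball⟩ := Metric.continuousAt_iff.1 hcont.continuousAt (u y / 2) (half_pos hy)
  set ρ := ρ' / 2 with hρdef
  have hρ : 0 < ρ := half_pos hρ'
  have hm : ∀ z, dist z y ≤ ρ → u y / 2 < u z := fun z hz => by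
    have := (abs_lt.1 (hball (lt_of_le_of_lt hz (half_lt_self hρ')))).1
    linarith
  by_cases hxρ : dist x y ≤ ρ
  · linarith [hm x hxρ]
  push Not at hxρ
  set ε := u y / 2 * ρ ^ 2 with hε
  have hεpos : 0 < ε := by positivity
  set K : Set (Ed 3) := {z | ρ ≤ dist z y} ∩ closedBall y R with hK
  have hKc : IsCompact K := (isCompact_closedBall y R).inter_left
    (isClosed_le continuous_const (by fun_prop))
  have hsq : ∀ z ∈ K, sqDist y z ≠ 0 := fun z hz => by
    have : 0 < dist z y := hρ.trans_le hz.1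
    rw [sqDist_eq]; positivity
  have hsqc : Continuous (sqDist y) := by
    unfold sqDist; fun_prop
  have hwc : ContinuousOn (fun z => u z - ε * (sqDist y z)⁻¹) K :=
    hcont.continuousOn.sub (continuousOn_const.mul (hsqc.continuousOn.inv₀ hsq))
  have hxK : x ∈ K := ⟨hxρ.le, (mem_ball.1 hx).le⟩
  obtain ⟨z, hz, hmin⟩ := hKc.exists_isMinOn ⟨x, hxK⟩ hwc
  have hv : ε * (R ^ 2)⁻¹ < ε * (sqDist y x)⁻¹ := by
    rw [sqDist_eq]
    have h0 : 0 < dist x y := hρ.trans hxρ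
    have : dist x y < R := hx
    gcongr
  have hzx := hmin hxK
  simp only [mem_ofPred_eq] at hzx
  by_cases hw : -(ε * (R ^ 2)⁻¹) ≤ u z - ε * (sqDist y z)⁻¹
  · linarith
  exfalso
  push Not at hw
  have hzR : dist z y < R := by
    refine lt_of_le_of_ne hz.2 fun h => ?_
    rw [sqDist_eq, h] at hw
    linarith [hnonneg z]
  have hzρ : ρ < dist z y := by
    refine lt_of_le_of_ne hz.1 fun h => ?_
    rw [sqDist_eq, ← h] at hw
    have h1 := hm z h.ge
    have h2 : ε * (ρ ^ 2)⁻¹ = u y / 2 := by rw [hε]; field_simp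
    have h3 : 0 < ε * (R ^ 2)⁻¹ := by positivity
    linarith
  have hKnhds : ∀ᶠ w in 𝓝 z, w ∈ K := by
    have h1 : ∀ᶠ w in 𝓝 z, ρ < dist w y :=
      (continuous_id.dist continuous_const).continuousAt.eventually (lt_mem_nhds hzρ)
    have h2 : ∀ᶠ w in 𝓝 z, dist w y < R :=
      (continuous_id.dist continuous_const).continuousAt.eventually (gt_mem_nhds hzR)
    filter_upwards [h1, h2] with w h1 h2 using ⟨h1.le, h2.le⟩
  have key : ∀ i, 0 ≤ partialDD u z i i -
      ε * (-2 / sqDist y z ^ 2 + 8 * (z i - y i) ^ 2 / sqDist y z ^ 3) := by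
    intro i
    refine ((hasSecondDerivAt_barrier (hdiff z hzR) (hsq z hz) ε i).isLocalMin ?_).2
    have hc : Tendsto (fun t : ℝ => z + t • (EuclideanSpace.single i 1 : Ed 3)) (𝓝 0) (𝓝 z) := by
      have : Continuous (fun t : ℝ => z + t • (EuclideanSpace.single i 1 : Ed 3)) := by fun_prop
      simpa using this.tendsto 0
    filter_upwards [hc.eventually hKnhds] with t ht
    simpa using hmin ht
  have hsum := Finset.sum_nonneg fun i (_ : i ∈ Finset.univ) => key i
  have hl := hlap z hzR
  rw [lapE_eq_sum_partialDD] at hl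
  have hn : 0 < sqDist y z := lt_of_le_of_ne (by rw [sqDist_eq]; positivity) (hsq z hz).symm
  have e1 : (z 0 - y 0) ^ 2 + (z 1 - y 1) ^ 2 + (z 2 - y 2) ^ 2 = sqDist y z := by
    simp [sqDist, Fin.sum_univ_three]
  rw [Fin.sum_univ_three] at hsum hl
  have e2 : -2 / sqDist y z ^ 2 + 8 * (z 0 - y 0) ^ 2 / sqDist y z ^ 3 +
      (-2 / sqDist y z ^ 2 + 8 * (z 1 - y 1) ^ 2 / sqDist y z ^ 3) +
      (-2 / sqDist y z ^ 2 + 8 * (z 2 - y 2) ^ 2 / sqDist y z ^ 3) = 2 / sqDist y z ^ 2 := by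
    field_simp
    linear_combination 8 * e1
  have e3 : 0 < ε * (2 / sqDist y z ^ 2) := by positivity
  rw [← e2] at e3
  linarith

/-- The strong maximum principle on a connected open set. -/
theorem pos_of_harmonic {u : Ed 3 → ℝ} {V : Set (Ed 3)} (hV : IsOpen V) (hVc : IsPreconnected V)
    (hcont : Continuous u) (hnonneg : ∀ x, 0 ≤ u x) (hdiff : ContDiffOn ℝ 2 u V)
    (hlap : ∀ x ∈ V, lapE 3 u x = 0) {y : Ed 3} (hyV : y ∈ V) (hy : 0 < u y) :
    ∀ x ∈ V, 0 < u x := by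
  have hball : ∀ x ∈ V, ∃ R > 0, ball x R ⊆ V := fun x hx => Metric.isOpen_iff.1 hV x hx
  have hsub : V ⊆ {x | 0 < u x} := by
    refine hVc.subset_of_closure_inter_subset (isOpen_lt continuous_const hcont) ⟨y, hyV, hy⟩ ?_
    rintro x ⟨hx, hxV⟩
    obtain ⟨R, hR, hRV⟩ := hball x hxV
    obtain ⟨z, hz, hzx⟩ := Metric.mem_closure_iff.1 hx (R / 2) (half_pos hR)
    have hzV : ball z (R / 2) ⊆ V := fun w hw => hRV (by
      rw [mem_ball] at hw ⊢
      have := dist_triangle w z x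
      rw [dist_comm z x] at this
      linarith)
    exact pos_on_ball_of_harmonic hcont hnonneg
      (fun w hw => hdiff.contDiffAt (hV.mem_nhds (hzV hw))) (fun w hw => hlap w (hzV hw)) hz hzx
  exact hsub

theorem homogeneity_exponent_pos {u : Ed 3 → ℝ} {β : ℝ} (hcont : Continuous u) (h0 : u 0 = 0)
    {x : Ed 3} (hx : u x ≠ 0)
    (hhom : ∀ r : ℝ, 0 < r → ∀ x : Ed 3, x ≠ 0 → u (r • x) = r ^ β * u x) : 0 < β := by
  by_contra! hβ
  have hx0 : x ≠ 0 := by rintro rfl; exact hx h0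
  have hc : Tendsto (fun r : ℝ => |u (r • x)|) (𝓝[>] 0) (𝓝 0) := by
    have : Continuous fun r : ℝ => |u (r • x)| := by fun_prop
    simpa [h0] using (this.tendsto 0).mono_left nhdsWithin_le_nhds
  have hev : ∀ᶠ r : ℝ in 𝓝[>] 0, |u x| ≤ |u (r • x)| := by
    filter_upwards [Ioo_mem_nhdsGT one_pos] with r hr
    rw [hhom r hr.1 x hx0, abs_mul, abs_of_pos (Real.rpow_pos_of_pos hr.1 β)]
    exact le_mul_of_one_le_left (abs_nonneg _)
      (Real.one_le_rpow_of_pos_of_le_one_of_nonpos hr.1 hr.2.le hβ)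
  exact (abs_pos.2 hx).not_ge (ge_of_tendsto hc hev)

/-- A positive Dirichlet eigenfunction on the sphero-conal coordinate rectangle. -/
structure ConalEigenfunction (s c lam : ℝ) (f : ℝ → ℝ → ℝ) : Prop where
  continuous : Continuous fun z : ℝ × ℝ => f z.1 z.2
  pos : ∀ φ ∈ Ioo 0 π, ∀ ψ ∈ Ioo (-π) π, 0 < f φ ψ
  eq_zero_left : f 0 = 0
  eq_zero_right : f π = 0
  eq_zero_bot : ∀ φ, f φ (-π) = 0
  eq_zero_top : ∀ φ, f φ π = 0
  equation : ∀ φ ∈ Ioo 0 π, ∀ ψ ∈ Ioo (-π) π, ∃ a₁ a₂ b₁ b₂,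
    HasSecondDerivAt (fun t => f t ψ) a₁ a₂ φ ∧ HasSecondDerivAt (fun t => f φ t) b₁ b₂ ψ ∧
      (1 - s * cos φ ^ 2) * a₂ + s * sin φ * cos φ * a₁ +
        ((1 - c * cos ψ ^ 2) * b₂ + c * sin ψ * cos ψ * b₁) =
      -lam * (c * sin ψ ^ 2 + s * sin φ ^ 2) * f φ ψ

theorem hasSecondDerivAt_sin_add_mul_cos_two (ε φ : ℝ) :
    HasSecondDerivAt (fun t => sin t + ε * (1 - 2 * sin t ^ 2)) (cos φ * (1 - 4 * ε * sin φ))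
      (-sin φ - 4 * ε * (1 - 2 * sin φ ^ 2)) φ := by
  have h := (hasSecondDerivAt_sin φ).add (((hasSecondDerivAt_const 1 φ).sub
    (((hasSecondDerivAt_sin φ).mul (hasSecondDerivAt_sin φ)).const_mul 2)).const_mul ε)
  refine (h.congr_values (by ring) ?_).congr (Eventually.of_forall fun t => by ring)
  linear_combination -4 * ε * sin_sq_add_cos_sq φ

theorem one_sub_mul_cos_sq_nonneg {s : ℝ} (hs1 : s ≤ 1) (t : ℝ) :
    0 ≤ 1 - s * cos t ^ 2 := by
  nlinarith [cos_sq_le_one t, sq_nonneg (cos t)]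

theorem conal_angular_identity (s ε φ : ℝ) :
    (1 - s * cos φ ^ 2) * (-sin φ - 4 * ε * (1 - 2 * sin φ ^ 2)) +
      s * sin φ * cos φ * (cos φ * (1 - 4 * ε * sin φ)) =
    (-1 + 2 * s - 2 * s * sin φ ^ 2) * (sin φ + ε * (1 - 2 * sin φ ^ 2)) +
      ε * ((1 - 2 * sin φ ^ 2) * (-3 + 2 * s - 2 * s * sin φ ^ 2) -
        4 * s * sin φ ^ 2 * (1 - sin φ ^ 2)) := by
  linear_combination (-s * (-sin φ - 4 * ε * (1 - 2 * sin φ ^ 2)) +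
    s * sin φ * (1 - 4 * ε * sin φ)) * cos_sq' φ

theorem conal_bracket_le {s S A : ℝ} (hs : 0 ≤ s) (hs1 : s ≤ 1) (hS : 0 ≤ S) (hS1 : S ≤ 1)
    (hA : 0 ≤ A) (hA' : 1 / 2 ≤ S ^ 2 → S - 1 / 4 ≤ A) :
    (1 - 2 * S ^ 2) * (-3 + 2 * s - 2 * s * S ^ 2) - 4 * s * S ^ 2 * (1 - S ^ 2) ≤ 8 * A := by
  have hY : S ^ 2 ≤ 1 := by nlinarith
  have h4 : 0 ≤ s * S ^ 2 * (1 - S ^ 2) := by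
    have := sub_nonneg.2 hY
    positivity
  rcases le_total (1 / 2) (S ^ 2) with h | h
  · have h1 := hA' h
    have h2 : 7 / 10 ≤ S := by nlinarith
    have h3 : 0 ≤ (2 * S ^ 2 - 1) * (s * (1 - S ^ 2)) := by
      have := sub_nonneg.2 hY
      have : 0 ≤ 2 * S ^ 2 - 1 := by linarith
      positivity
    nlinarith
  · have h3 : 0 ≤ (1 - 2 * S ^ 2) * (3 - 2 * s + 2 * s * S ^ 2) := by
      have : 0 ≤ 1 - 2 * S ^ 2 := by linarith
      have : 0 ≤ 3 - 2 * s := by linarith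
      positivity
    nlinarith

theorem Ioo_of_Icc_of_ne {a b x : ℝ} (h : x ∈ Icc a b) (ha : x ≠ a) (hb : x ≠ b) : x ∈ Ioo a b :=
  ⟨lt_of_le_of_ne h.1 ha.symm, lt_of_le_of_ne h.2 hb⟩

/-- A positive supersolution bounds the eigenvalue from below. -/
theorem ConalEigenfunction.le_of_supersolution {s c lam lam' σ₀ : ℝ} {f : ℝ → ℝ → ℝ} {B : ℝ → ℝ}
    (hf : ConalEigenfunction s c lam f) (hs : 0 < s) (hs1 : s ≤ 1) (hc : 0 ≤ c)
    (hsc : s + c = 1) (hlam' : lam' ≤ 2) (hσ₀ : 0 < σ₀) (hB : ContinuousOn B (Icc (-π) π))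
    (hBpos : ∀ ψ ∈ Icc (-π) π, 0 < B ψ)
    (hBsuper : ∀ ψ ∈ Ioo (-π) π, ∃ B₁ B₂, HasSecondDerivAt B B₁ B₂ ψ ∧
      (1 - c * cos ψ ^ 2) * B₂ + c * sin ψ * cos ψ * B₁ ≤
        (1 - 2 * s - lam' * c * sin ψ ^ 2 - σ₀) * B ψ) :
    lam' ≤ lam := by
  obtain ⟨ε, hε, hε1, hε2⟩ : ∃ ε : ℝ, 0 < ε ∧ ε ≤ 1 / 4 ∧ 8 * ε ≤ σ₀ :=
    ⟨min (1 / 4) (σ₀ / 8), by positivity, min_le_left _ _, by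
      linarith [min_le_right (1 / 4) (σ₀ / 8)]⟩
  set A : ℝ → ℝ := fun t => sin t + ε * (1 - 2 * sin t ^ 2) with hAdef
  have hA : Continuous A := by fun_prop
  have hApos : ∀ φ ∈ Icc 0 π, 0 < A φ := fun φ hφ => by
    have h0 := sin_nonneg_of_mem_Icc hφ
    have h1 := sin_le_one φ
    simp only [hAdef]
    nlinarith [mul_nonneg hε.le (mul_nonneg h0 (sub_nonneg.2 h1))]
  set K : Set (ℝ × ℝ) := Icc 0 π ×ˢ Icc (-π) π with hK
  have hKc : IsCompact K := isCompact_Icc.prod isCompact_Icc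
  have hg : ContinuousOn (fun z : ℝ × ℝ => f z.1 z.2 / (A z.1 * B z.2)) K := by
    refine hf.continuous.continuousOn.div ((hA.comp continuous_fst).continuousOn.mul
      (hB.comp continuous_snd.continuousOn fun z hz => hz.2)) fun z hz => ?_
    exact (mul_pos (hApos _ hz.1) (hBpos _ hz.2)).ne'
  have hπ := pi_pos
  have hφ₁ : π / 2 ∈ Ioo 0 π := ⟨by linarith, by linarith⟩
  have hψ₁ : (0 : ℝ) ∈ Ioo (-π) π := ⟨by linarith, by linarith⟩
  have h₁K : (π / 2, (0 : ℝ)) ∈ K := ⟨Ioo_subset_Icc_self hφ₁, Ioo_subset_Icc_self hψ₁⟩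
  obtain ⟨⟨φ, ψ⟩, ⟨hφ, hψ⟩, hmax⟩ := hKc.exists_isMaxOn ⟨_, h₁K⟩ hg
  simp only at hφ hψ
  rw [isMaxOn_iff] at hmax
  simp only at hmax
  obtain ⟨M, hM⟩ : ∃ M, M = f φ ψ / (A φ * B ψ) := ⟨_, rfl⟩
  rw [← hM] at hmax
  have hMpos : 0 < M := by
    have h := hmax (π / 2, 0) h₁K
    exact (div_pos (hf.pos _ hφ₁ _ hψ₁) (mul_pos (hApos _ h₁K.1) (hBpos _ h₁K.2))).trans_le h
  have hf0 : f φ ψ ≠ 0 := fun h => by simp [hM, h] at hMpos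
  replace hφ : φ ∈ Ioo 0 π := Ioo_of_Icc_of_ne hφ
    (by rintro rfl; exact hf0 (congrFun hf.eq_zero_left _))
    (by rintro rfl; exact hf0 (congrFun hf.eq_zero_right _))
  replace hψ : ψ ∈ Ioo (-π) π := Ioo_of_Icc_of_ne hψ
    (by rintro rfl; exact hf0 (hf.eq_zero_bot _)) (by rintro rfl; exact hf0 (hf.eq_zero_top _))
  have hAφ := hApos φ (Ioo_subset_Icc_self hφ)
  have hBψ := hBpos ψ (Ioo_subset_Icc_self hψ)
  have hle : ∀ φ' ∈ Icc 0 π, ∀ ψ' ∈ Icc (-π) π, 0 ≤ M * (A φ' * B ψ') - f φ' ψ' := by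
    intro φ' hφ' ψ' hψ'
    have h : f φ' ψ' / (A φ' * B ψ') ≤ M := hmax (φ', ψ') ⟨hφ', hψ'⟩
    rw [div_le_iff₀ (mul_pos (hApos _ hφ') (hBpos _ hψ'))] at h
    linarith
  have heq : f φ ψ = M * (A φ * B ψ) := by rw [hM]; field_simp
  obtain ⟨a₁, a₂, b₁, b₂, ha, hb, he⟩ := hf.equation φ hφ ψ hψ
  obtain ⟨B₁, B₂, hB12, hBle⟩ := hBsuper ψ hψ
  have hA12 := hasSecondDerivAt_sin_add_mul_cos_two ε φ
  obtain ⟨u1, u2⟩ := ((hA12.const_mul (M * B ψ)).sub ha).isLocalMin (by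
    filter_upwards [Icc_mem_nhds hφ.1 hφ.2] with t ht
    have := hle t ht ψ (Ioo_subset_Icc_self hψ)
    simp only [hAdef] at this heq
    linarith)
  obtain ⟨v1, v2⟩ := ((hB12.const_mul (M * A φ)).sub hb).isLocalMin (by
    filter_upwards [Icc_mem_nhds hψ.1 hψ.2] with t ht
    have := hle φ (Ioo_subset_Icc_self hφ) t ht
    linarith)
  have hS0 : 0 < sin φ := sin_pos_of_mem_Ioo hφ
  have hbr := conal_bracket_le hs.le hs1 hS0.le (sin_le_one φ) hAφ.le (fun h => by
    have h1 : 0 ≤ (1 / 4 - ε) * (2 * sin φ ^ 2 - 1) := mul_nonneg (by linarith) (by linarith)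
    simp only [hAdef]
    linarith [sin_sq_le_one φ])
  have hh := one_sub_mul_cos_sq_nonneg hs1 φ
  have hp := one_sub_mul_cos_sq_nonneg (s := c) (by linarith) ψ
  have hLA : (1 - s * cos φ ^ 2) * (-sin φ - 4 * ε * (1 - 2 * sin φ ^ 2)) +
      s * sin φ * cos φ * (cos φ * (1 - 4 * ε * sin φ)) ≤
      (-1 + 2 * s - 2 * s * sin φ ^ 2 + 8 * ε) * A φ := by
    have := mul_le_mul_of_nonneg_left hbr hε.le
    rw [conal_angular_identity]
    linarith
  have hN : 0 < c * sin ψ ^ 2 + s * sin φ ^ 2 := by positivity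
  have hfpos : 0 < f φ ψ := hf.pos φ hφ ψ hψ
  have h1 := mul_nonneg hh u2
  have h2 := mul_nonneg hp v2
  have h3 := mul_le_mul_of_nonneg_left hLA (mul_pos hMpos hBψ).le
  have h4 := mul_le_mul_of_nonneg_left hBle (mul_pos hMpos hAφ).le
  have h5 : -lam * (c * sin ψ ^ 2 + s * sin φ ^ 2) * f φ ψ ≤
      (-2 * s * sin φ ^ 2 - lam' * c * sin ψ ^ 2 + (8 * ε - σ₀)) * f φ ψ := by
    rw [← he, heq]
    linear_combination h1 + h2 + h3 + h4 - s * sin φ * cos φ * u1 - c * sin ψ * cos ψ * v1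
  have h6 := le_of_mul_le_mul_right h5 hfpos
  have h7 : 0 ≤ (2 - lam') * (s * sin φ ^ 2) := mul_nonneg (by linarith) (by positivity)
  have h8 : lam' * (c * sin ψ ^ 2 + s * sin φ ^ 2) ≤ lam * (c * sin ψ ^ 2 + s * sin φ ^ 2) := by
    linarith
  exact le_of_mul_le_mul_right h8 hN

/-- A subsolution bounds the eigenvalue from above. -/
theorem ConalEigenfunction.ge_of_subsolution {s c lam lam' σ₀ : ℝ} {f : ℝ → ℝ → ℝ} {B : ℝ → ℝ}
    (hf : ConalEigenfunction s c lam f) (hs : 0 < s) (hs1 : s ≤ 1) (hc : 0 ≤ c)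
    (hsc : s + c = 1) (hlam' : lam' ≤ 2) (hσ₀ : 0 < σ₀) (hB : ContinuousOn B (Icc (-π) π))
    (hBbot : B (-π) < 0) (hBtop : B π < 0) (hB0 : 0 < B 0)
    (hBsub : ∀ ψ ∈ Ioo (-π) π, 0 < B ψ → ∃ B₁ B₂, HasSecondDerivAt B B₁ B₂ ψ ∧
      (1 - 2 * s - lam' * c * sin ψ ^ 2 + (2 - lam') * s + σ₀) * B ψ ≤
      (1 - c * cos ψ ^ 2) * B₂ + c * sin ψ * cos ψ * B₁) :
    lam ≤ lam' := by
  obtain ⟨ε, hε, hε1, hε2⟩ : ∃ ε : ℝ, 0 < ε ∧ ε ≤ 1 / 4 ∧ 8 * ε ≤ σ₀ :=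
    ⟨min (1 / 4) (σ₀ / 8), by positivity, min_le_left _ _, by
      linarith [min_le_right (1 / 4) (σ₀ / 8)]⟩
  set A : ℝ → ℝ := fun t => sin t + (-ε) * (1 - 2 * sin t ^ 2) with hAdef
  have hA : Continuous A := by fun_prop
  set R : Set (ℝ × ℝ) := Icc 0 π ×ˢ Icc (-π) π with hR
  have hAR : ContinuousOn (fun z : ℝ × ℝ => A z.1) R := (hA.comp continuous_fst).continuousOn
  have hBR : ContinuousOn (fun z : ℝ × ℝ => B z.2) R :=
    hB.comp continuous_snd.continuousOn fun z hz => hz.2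
  have hRc : IsCompact R := isCompact_Icc.prod isCompact_Icc
  set K : Set (ℝ × ℝ) := (R ∩ (fun z : ℝ × ℝ => A z.1) ⁻¹' Ici 0) ∩
    (R ∩ (fun z : ℝ × ℝ => B z.2) ⁻¹' Ici 0) with hK
  have hKc : IsCompact K :=
    (hRc.of_isClosed_subset (hAR.preimage_isClosed_of_isClosed hRc.isClosed isClosed_Ici)
      inter_subset_left).inter_right
      (hBR.preimage_isClosed_of_isClosed hRc.isClosed isClosed_Ici)
  have hKint : ∀ z ∈ K, z.1 ∈ Ioo 0 π ∧ z.2 ∈ Ioo (-π) π := by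
    rintro ⟨φ, ψ⟩ ⟨⟨⟨h1, h2⟩, h3⟩, -, h4⟩
    simp only [mem_preimage, mem_Ici] at h1 h2 h3 h4 ⊢
    refine ⟨Ioo_of_Icc_of_ne h1 ?_ ?_, Ioo_of_Icc_of_ne h2 ?_ ?_⟩
    · rintro rfl
      simp [hAdef] at h3
      linarith
    · rintro rfl
      simp [hAdef] at h3
      linarith
    · rintro rfl
      linarith
    · rintro rfl
      linarith
  have hg : ContinuousOn (fun z : ℝ × ℝ => A z.1 * B z.2 / f z.1 z.2) K := by
    refine ((hAR.mul hBR).mono fun z hz => hz.1.1).div hf.continuous.continuousOn fun z hz => ?_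
    exact (hf.pos _ (hKint z hz).1 _ (hKint z hz).2).ne'
  have hπ := pi_pos
  have hφ₁ : π / 2 ∈ Ioo 0 π := ⟨by linarith, by linarith⟩
  have hψ₁ : (0 : ℝ) ∈ Ioo (-π) π := ⟨by linarith, by linarith⟩
  have hA₁ : 0 < A (π / 2) := by simp [hAdef]; linarith
  have h₁K : (π / 2, (0 : ℝ)) ∈ K := by
    have : (π / 2, (0 : ℝ)) ∈ R := ⟨Ioo_subset_Icc_self hφ₁, Ioo_subset_Icc_self hψ₁⟩
    exact ⟨⟨this, hA₁.le⟩, this, hB0.le⟩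
  obtain ⟨⟨φ, ψ⟩, hz, hmax⟩ := hKc.exists_isMaxOn ⟨_, h₁K⟩ hg
  obtain ⟨hφ, hψ⟩ := hKint _ hz
  simp only at hφ hψ
  rw [isMaxOn_iff] at hmax
  simp only at hmax
  obtain ⟨M, hM⟩ : ∃ M, M = A φ * B ψ / f φ ψ := ⟨_, rfl⟩
  rw [← hM] at hmax
  have hMpos : 0 < M := by
    have h := hmax (π / 2, 0) h₁K
    exact (div_pos (mul_pos hA₁ hB0) (hf.pos _ hφ₁ _ hψ₁)).trans_le h
  have hfpos : 0 < f φ ψ := hf.pos φ hφ ψ hψ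
  have hAB : A φ * B ψ ≠ 0 := fun h => by simp [hM, h] at hMpos
  have hAφ : 0 < A φ := lt_of_le_of_ne hz.1.2 (left_ne_zero_of_mul hAB).symm
  have hBψ : 0 < B ψ := lt_of_le_of_ne hz.2.2 (right_ne_zero_of_mul hAB).symm
  have hle : ∀ φ' ∈ Icc 0 π, ∀ ψ' ∈ Icc (-π) π, 0 < A φ' → 0 < B ψ' →
      0 ≤ M * f φ' ψ' - A φ' * B ψ' := by
    intro φ' hφ' ψ' hψ' hA' hB'
    have hzK : (φ', ψ') ∈ K := ⟨⟨⟨hφ', hψ'⟩, hA'.le⟩, ⟨hφ', hψ'⟩, hB'.le⟩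
    have h : A φ' * B ψ' / f φ' ψ' ≤ M := hmax (φ', ψ') hzK
    rw [div_le_iff₀ (hf.pos _ (hKint _ hzK).1 _ (hKint _ hzK).2)] at h
    linarith
  have heq : A φ * B ψ = M * f φ ψ := by rw [hM]; field_simp
  obtain ⟨a₁, a₂, b₁, b₂, ha, hb, he⟩ := hf.equation φ hφ ψ hψ
  obtain ⟨B₁, B₂, hB12, hBle⟩ := hBsub ψ hψ hBψ
  have hA12 := hasSecondDerivAt_sin_add_mul_cos_two (-ε) φ
  obtain ⟨u1, u2⟩ := ((ha.const_mul M).sub (hA12.const_mul (B ψ))).isLocalMin (by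
    filter_upwards [Icc_mem_nhds hφ.1 hφ.2, hA.continuousAt.eventually (lt_mem_nhds hAφ)] with
      t ht ht'
    have := hle t ht ψ (Ioo_subset_Icc_self hψ) ht' hBψ
    simp only [hAdef] at this heq
    linarith)
  obtain ⟨v1, v2⟩ := ((hb.const_mul M).sub (hB12.const_mul (A φ))).isLocalMin (by
    filter_upwards [Icc_mem_nhds hψ.1 hψ.2,
      hB12.hasDerivAt.continuousAt.eventually (lt_mem_nhds hBψ)] with t ht ht'
    have := hle φ (Ioo_subset_Icc_self hφ) t ht hAφ ht'
    linarith)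
  have hS0 : 0 < sin φ := sin_pos_of_mem_Ioo hφ
  have hbr := conal_bracket_le hs.le hs1 hS0.le (sin_le_one φ) hAφ.le (fun h => by
    have h1 : 0 ≤ ε * (2 * sin φ ^ 2 - 1) := mul_nonneg hε.le (by linarith)
    simp only [hAdef]
    linarith)
  have hh := one_sub_mul_cos_sq_nonneg hs1 φ
  have hp := one_sub_mul_cos_sq_nonneg (s := c) (by linarith) ψ
  have hLA : (-1 + 2 * s - 2 * s * sin φ ^ 2 - 8 * ε) * A φ ≤
      (1 - s * cos φ ^ 2) * (-sin φ - 4 * -ε * (1 - 2 * sin φ ^ 2)) +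
      s * sin φ * cos φ * (cos φ * (1 - 4 * -ε * sin φ)) := by
    have := mul_le_mul_of_nonneg_left hbr hε.le
    rw [conal_angular_identity]
    linarith
  have hN : 0 < c * sin ψ ^ 2 + s * sin φ ^ 2 := by positivity
  have h1 := mul_nonneg hh u2
  have h2 := mul_nonneg hp v2
  have h3 := mul_le_mul_of_nonneg_left hLA hBψ.le
  have h4 := mul_le_mul_of_nonneg_left hBle hAφ.le
  have h5 : (-2 * s * sin φ ^ 2 - lam' * c * sin ψ ^ 2 + (2 - lam') * s + (σ₀ - 8 * ε)) *
      (M * f φ ψ) ≤ -lam * (c * sin ψ ^ 2 + s * sin φ ^ 2) * (M * f φ ψ) := by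
    have he' : -lam * (c * sin ψ ^ 2 + s * sin φ ^ 2) * (M * f φ ψ) = M *
        ((1 - s * cos φ ^ 2) * a₂ + s * sin φ * cos φ * a₁ +
        ((1 - c * cos ψ ^ 2) * b₂ + c * sin ψ * cos ψ * b₁)) := by rw [he]; ring
    rw [he', ← heq]
    linear_combination h1 + h2 + h3 + h4 - s * sin φ * cos φ * u1 - c * sin ψ * cos ψ * v1
  have h6 := le_of_mul_le_mul_right h5 (mul_pos hMpos hfpos)
  have h7 : 0 ≤ (2 - lam') * (s * (1 - sin φ ^ 2)) :=
    mul_nonneg (by linarith) (mul_nonneg hs.le (by linarith [sin_sq_le_one φ]))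
  have h8 : lam * (c * sin ψ ^ 2 + s * sin φ ^ 2) ≤ lam' * (c * sin ψ ^ 2 + s * sin φ ^ 2) := by
    linarith
  exact le_of_mul_le_mul_right h8 hN

/-- The square of the leading term of the comparison profile, as a function of `cos ψ`. -/
noncomputable def profileT (s x : ℝ) : ℝ := 1 - (1 - s) * x ^ 2 - s / 8 * (1 - x) ^ 3

/-- The integrand of the second term of the comparison profile. -/
noncomputable def profileW (s t : ℝ) : ℝ :=
  -(s / 16) * ((5 - cos t) * (1 + cos t)) * (√(1 - (1 - s) * cos t ^ 2))⁻¹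

/-- The comparison profile. -/
noncomputable def profile (s κ a ψ : ℝ) : ℝ :=
  √(profileT s (cos ψ)) + (1 + κ) * (sin ψ * ∫ t in (0 : ℝ)..ψ, profileW s t) +
    a * (1 - cos ψ) ^ 2

theorem le_one_sub_mul_cos_sq {s : ℝ} (hs1 : s ≤ 1) (t : ℝ) :
    s ≤ 1 - (1 - s) * cos t ^ 2 := by
  nlinarith [cos_sq_le_one t]

theorem continuous_profileW {s : ℝ} (hs : 0 < s) (hs1 : s ≤ 1) : Continuous (profileW s) := by
  have h : ∀ t, √(1 - (1 - s) * cos t ^ 2) ≠ 0 := fun t =>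
    (Real.sqrt_pos.2 (hs.trans_le (le_one_sub_mul_cos_sq hs1 t))).ne'
  unfold profileW
  fun_prop (disch := exact h)

theorem continuous_profile {s : ℝ} (hs : 0 < s) (hs1 : s ≤ 1) (κ a : ℝ) :
    Continuous (profile s κ a) := by
  have h1 : Continuous fun ψ => ∫ t in (0 : ℝ)..ψ, profileW s t :=
    intervalIntegral.continuous_primitive (fun _ _ =>
      (continuous_profileW hs hs1).intervalIntegrable _ _) 0
  unfold profile profileT
  fun_prop

theorem abs_profileW_le {q : ℝ} (hq : 0 < q) (hq1 : q ≤ 1) (t : ℝ) :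
    |profileW (q ^ 2) t| ≤ q / 2 := by
  have hp : q ≤ √(1 - (1 - q ^ 2) * cos t ^ 2) :=
    Real.le_sqrt_of_sq_le (le_one_sub_mul_cos_sq (by nlinarith) t)
  have hx := neg_one_le_cos t
  have hx' := cos_le_one t
  have hk : 0 ≤ (5 - cos t) * (1 + cos t) := mul_nonneg (by linarith) (by linarith)
  have hk' : (5 - cos t) * (1 + cos t) ≤ 8 := by nlinarith
  rw [profileW, abs_mul, abs_mul, abs_neg, abs_of_nonneg hk, abs_of_pos (by positivity),
    abs_of_pos (inv_pos.2 (hq.trans_le hp))]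
  calc _ ≤ q ^ 2 / 16 * 8 * q⁻¹ := by gcongr
    _ = q / 2 := by field_simp; norm_num

theorem abs_integral_profileW_le {q ψ : ℝ} (hq : 0 < q) (hq1 : q ≤ 1) (hψ : ψ ∈ Icc (-π) π) :
    |∫ t in (0 : ℝ)..ψ, profileW (q ^ 2) t| ≤ 8 / 5 * q := by
  have h := intervalIntegral.norm_integral_le_of_norm_le_const (a := 0) (b := ψ)
    (f := profileW (q ^ 2)) (C := q / 2) fun t _ => abs_profileW_le hq hq1 t
  rw [Real.norm_eq_abs, sub_zero] at h
  have h2 : |ψ| ≤ 3.15 := (abs_le.2 hψ).trans pi_lt_d2.le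
  nlinarith

/-- The residual of the leading term of the profile, in the variable `y = 1 - cos ψ`. -/
noncomputable def profileN (s y : ℝ) : ℝ :=
  y ^ 2 * (s ^ 2 * (-y / 16 + 5 * y ^ 2 / 64 + 3 * y ^ 3 / 64 - 9 * y ^ 4 / 256) +
    s ^ 3 * (-3 / 64 + 3 * y / 32 - 9 * y ^ 2 / 256 - 3 * y ^ 3 / 64 + y ^ 4 / 32 - y ^ 5 / 256))

/-- `profileT` divided by `1 + cos ψ`, in the variable `y = 1 - cos ψ`. -/
noncomputable def profileS (s y : ℝ) : ℝ := y + s / 8 * (4 - 6 * y + y ^ 2)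

/-- The source of the equation solved by the second term, in the variable `y = 1 - cos ψ`. -/
noncomputable def profileG (y : ℝ) : ℝ := (2 - y) * (-2 + 2 * y + y ^ 2)

/-- The contribution of the last term of the profile, in the variable `y = 1 - cos ψ`. -/
noncomputable def profileJ (s y : ℝ) : ℝ :=
  y ^ 2 * (3 - 2 * y) * (5 - 2 * y) + s * y * (6 - 18 * y + 16 * y ^ 2 - 4 * y ^ 3)

theorem profileT_eq (s x : ℝ) : profileT s x = (1 + x) * profileS s (1 - x) := by
  unfold profileT profileS; ring

theorem le_profileS {s y : ℝ} (hs : 0 ≤ s) : (1 - s) * y + s / 2 + s * y / 4 ≤ profileS s y := by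
  unfold profileS; nlinarith [mul_nonneg hs (sq_nonneg y)]

theorem profileS_pos {s y : ℝ} (hs : 0 < s) (hs1 : s < 1) (hy : 0 ≤ y) : 0 < profileS s y := by
  have := le_profileS (y := y) hs.le
  nlinarith [mul_nonneg (sub_nonneg.2 hs1.le) hy, mul_nonneg hs.le hy]

theorem hasSecondDerivAt_cos_comp_profileT (s ψ : ℝ) :
    HasSecondDerivAt (fun t => profileT s (cos t))
      (-sin ψ * (-2 * (1 - s) * cos ψ + 3 * s / 8 * (1 - cos ψ) ^ 2))
      (-cos ψ * (-2 * (1 - s) * cos ψ + 3 * s / 8 * (1 - cos ψ) ^ 2) +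
        sin ψ ^ 2 * (-2 * (1 - s) - 3 * s / 4 * (1 - cos ψ))) ψ := by
  have hx := hasSecondDerivAt_cos ψ
  have hy := (hasSecondDerivAt_const 1 ψ).sub hx
  have h := ((hasSecondDerivAt_const 1 ψ).sub ((hx.mul hx).const_mul (1 - s))).sub
    ((hy.mul (hy.mul hy)).const_mul (s / 8))
  exact (h.congr_values (by ring) (by ring)).congr
    (Eventually.of_forall fun t => by simp only [profileT]; ring)

/-- The leading term of the profile solves the limiting equation up to small errors. -/
theorem exists_secondDeriv_sqrt_profileT {s ψ : ℝ} (hs : 0 < s) (hs1 : s < 1)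
    (hψ : -1 < cos ψ) :
    ∃ g₁ g₂, HasSecondDerivAt (fun t => √(profileT s (cos t))) g₁ g₂ ψ ∧
      (1 - (1 - s) * cos ψ ^ 2) * g₂ + (1 - s) * sin ψ * cos ψ * g₁ =
        (1 - 2 * s - 2 * (1 - s) * sin ψ ^ 2) * √(profileT s (cos ψ)) +
        √(profileT s (cos ψ)) * (profileN s (1 - cos ψ) / profileS s (1 - cos ψ) ^ 2 +
          3 * s / 4 * sin ψ ^ 2 - s / 4 * ((1 + cos ψ) * (1 - 4 * cos ψ + cos ψ ^ 2))) := by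
  have hS : 0 < profileS s (1 - cos ψ) :=
    profileS_pos hs hs1 (sub_nonneg.2 (cos_le_one ψ))
  have hT : 0 < profileT s (cos ψ) := by
    rw [profileT_eq]; exact mul_pos (by linarith) hS
  have hx : 0 < 1 + cos ψ := by linarith
  refine ⟨_, _, (hasSecondDerivAt_cos_comp_profileT s ψ).sqrt hT, ?_⟩
  have hR : 0 < √(profileT s (cos ψ)) := Real.sqrt_pos.2 hT
  have eR : √(profileT s (cos ψ)) ^ 2 = (1 + cos ψ) * profileS s (1 - cos ψ) := by
    rw [Real.sq_sqrt hT.le, profileT_eq]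
  have eT := profileT_eq s (cos ψ)
  have tψ : sin ψ ^ 2 = 1 - cos ψ ^ 2 := sin_sq ψ
  generalize √(profileT s (cos ψ)) = R at *
  rw [eT]
  have poly : (1 - (1 - s) * cos ψ ^ 2) * ((-cos ψ * (-2 * (1 - s) * cos ψ +
        3 * s / 8 * (1 - cos ψ) ^ 2) +
        (1 - cos ψ ^ 2) * (-2 * (1 - s) - 3 * s / 4 * (1 - cos ψ))) / 2 * ((1 + cos ψ) * profileS s (1 - cos ψ)) -
      (1 - cos ψ ^ 2) * (-2 * (1 - s) * cos ψ + 3 * s / 8 * (1 - cos ψ) ^ 2) ^ 2 / 4) -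
      (1 - s) * (1 - cos ψ ^ 2) * cos ψ * (-2 * (1 - s) * cos ψ + 3 * s / 8 * (1 - cos ψ) ^ 2) / 2 *
        ((1 + cos ψ) * profileS s (1 - cos ψ)) =
      (1 + cos ψ) ^ 2 * (profileS s (1 - cos ψ) ^ 2 * (1 - 2 * s - 2 * (1 - s) * (1 - cos ψ ^ 2) +
        3 * s / 4 * (1 - cos ψ ^ 2) - s / 4 * ((1 + cos ψ) * (1 - 4 * cos ψ + cos ψ ^ 2))) +
        profileN s (1 - cos ψ)) := by
    unfold profileS profileN
    ring
  generalize profileS s (1 - cos ψ) = S at *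
  generalize profileN s (1 - cos ψ) = N at *
  generalize -2 * (1 - s) * cos ψ + 3 * s / 8 * (1 - cos ψ) ^ 2 = T₁ at *
  generalize -2 * (1 - s) - 3 * s / 4 * (1 - cos ψ) = T₂ at *
  field_simp
  rw [tψ, eR]
  linear_combination (8 * S) * poly

/-- The second term of the profile. -/
theorem exists_secondDeriv_sin_mul_integral {s : ℝ} (hs : 0 < s) (hs1 : s ≤ 1) (ψ : ℝ) :
    ∃ g₁ g₂, HasSecondDerivAt (fun ψ => sin ψ * ∫ t in (0 : ℝ)..ψ, profileW s t) g₁ g₂ ψ ∧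
      (1 - (1 - s) * cos ψ ^ 2) * g₂ + (1 - s) * sin ψ * cos ψ * g₁ =
        (1 - 2 * s - 2 * (1 - s) * sin ψ ^ 2) * (sin ψ * ∫ t in (0 : ℝ)..ψ, profileW s t) +
        s / 4 * √(1 - (1 - s) * cos ψ ^ 2) * ((1 + cos ψ) * (1 - 4 * cos ψ + cos ψ ^ 2)) := by
  have hpos : 0 < 1 - (1 - s) * cos ψ ^ 2 := hs.trans_le (le_one_sub_mul_cos_sq hs1 ψ)
  obtain ⟨p₁, p₂, hp, hp1, -⟩ := hasSecondDerivAt_sqrt_conal (s := 1 - s) ψ hpos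
  have hR : 0 < √(1 - (1 - s) * cos ψ ^ 2) := Real.sqrt_pos.2 hpos
  have eR : √(1 - (1 - s) * cos ψ ^ 2) ^ 2 = 1 - (1 - s) * cos ψ ^ 2 := Real.sq_sqrt hpos.le
  have hQ : HasSecondDerivAt (fun ψ => ∫ t in (0 : ℝ)..ψ, profileW s t) (profileW s ψ)
      (-(s / 16) * (-sin ψ * (4 - 2 * cos ψ) * (√(1 - (1 - s) * cos ψ ^ 2))⁻¹ -
        (5 - cos ψ) * (1 + cos ψ) * p₁ / √(1 - (1 - s) * cos ψ ^ 2) ^ 2)) ψ := by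
    refine ⟨profileW s, Eventually.of_forall fun τ => ?_, rfl, ?_⟩
    · exact intervalIntegral.integral_hasDerivAt_right
        ((continuous_profileW hs hs1).intervalIntegrable _ _)
        (continuous_profileW hs hs1).stronglyMeasurable.stronglyMeasurableAtFilter
        (continuous_profileW hs hs1).continuousAt
    · have hc := hasDerivAt_cos ψ
      have h := ((((hasDerivAt_const ψ (5 : ℝ)).sub hc).mul
        ((hasDerivAt_const ψ (1 : ℝ)).add hc)).const_mul (-(s / 16))).mul (hp.hasDerivAt.inv hR.ne')
      refine h.congr_deriv ?_
      simp
      ring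
  refine ⟨_, _, (hasSecondDerivAt_sin ψ).mul hQ, ?_⟩
  have tψ : sin ψ ^ 2 = 1 - cos ψ ^ 2 := sin_sq ψ
  generalize (∫ t in (0 : ℝ)..ψ, profileW s t) = Q
  rw [profileW]
  generalize √(1 - (1 - s) * cos ψ ^ 2) = R at *
  have hp1' : p₁ = (1 - s) * sin ψ * cos ψ / R := by
    rw [eq_div_iff hR.ne', mul_comm]; exact hp1
  rw [hp1', ← eR]
  generalize cos ψ = x at *
  generalize sin ψ = σ at *
  field_simp
  linear_combination (-64 * R * σ * Q) * eR +
    (128 * (1 - s) * R * σ * Q + 4 * s * R ^ 2 * (4 - 2 * x)) * tψ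

/-- The equation satisfied by the comparison profile. -/
theorem exists_secondDeriv_profile {s ψ : ℝ} (hs : 0 < s) (hs1 : s < 1) (κ a : ℝ)
    (hψ : -1 < cos ψ) :
    ∃ B₁ B₂, HasSecondDerivAt (profile s κ a) B₁ B₂ ψ ∧
      (1 - (1 - s) * cos ψ ^ 2) * B₂ + (1 - s) * sin ψ * cos ψ * B₁ =
        (1 - 2 * s - 2 * (1 - s) * sin ψ ^ 2) * profile s κ a ψ +
        (√(profileT s (cos ψ)) * (profileN s (1 - cos ψ) / profileS s (1 - cos ψ) ^ 2 +
          3 * s / 4 * sin ψ ^ 2) +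
        s / 4 * profileG (1 - cos ψ) *
          ((1 + κ) * √(1 - (1 - s) * cos ψ ^ 2) - √(profileT s (cos ψ))) +
        a * profileJ s (1 - cos ψ)) := by
  obtain ⟨g₁, g₂, hg, eg⟩ := exists_secondDeriv_sqrt_profileT hs hs1 hψ
  obtain ⟨k₁, k₂, hk, ek⟩ := exists_secondDeriv_sin_mul_integral hs hs1.le ψ
  have hy := (hasSecondDerivAt_const 1 ψ).sub (hasSecondDerivAt_cos ψ)
  have h := (hg.add (hk.const_mul (1 + κ))).add ((hy.mul hy).const_mul a)
  refine ⟨_, _, h.congr (Eventually.of_forall fun t => by simp only [profile]; ring), ?_⟩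
  have hJ : (1 - (1 - s) * cos ψ ^ 2) * (2 * (1 - cos ψ ^ 2) + 2 * (1 - cos ψ) * cos ψ) +
      2 * (1 - s) * (1 - cos ψ ^ 2) * cos ψ * (1 - cos ψ) =
      (1 - 2 * s - 2 * (1 - s) * (1 - cos ψ ^ 2)) * (1 - cos ψ) ^ 2 + profileJ s (1 - cos ψ) := by
    unfold profileJ; ring
  rw [← sin_sq ψ] at hJ
  unfold profile profileG
  linear_combination eg + (1 + κ) * ek + a * hJ

theorem abs_profileN_le {s y : ℝ} (hs : 0 ≤ s) (hs1 : s ≤ 1 / 1000) (hy : 0 ≤ y) (hy2 : y ≤ 2) :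
    |profileN s y| ≤ s ^ 2 * profileS s y ^ 2 := by
  have hS : 999 / 1000 * y ≤ profileS s y := by
    have := le_profileS (y := y) hs
    nlinarith [mul_nonneg hs hy]
  have hS2 : (999 / 1000 * y) ^ 2 ≤ profileS s y ^ 2 := by gcongr
  have h2 : y ^ 2 ≤ 2 ^ 2 := by gcongr
  have h3 : y ^ 3 ≤ 2 ^ 3 := by gcongr
  have h4 : y ^ 4 ≤ 2 ^ 4 := by gcongr
  have h5 : y ^ 5 ≤ 2 ^ 5 := by gcongr
  have p2 : 0 ≤ y ^ 2 := by positivity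
  have p3 : 0 ≤ y ^ 3 := by positivity
  have p4 : 0 ≤ y ^ 4 := by positivity
  have p5 : 0 ≤ y ^ 5 := by positivity
  have hC : |-3 / 64 + 3 * y / 32 - 9 * y ^ 2 / 256 - 3 * y ^ 3 / 64 + y ^ 4 / 32 - y ^ 5 / 256|
      ≤ 2 := abs_le.2 ⟨by linarith, by linarith⟩
  have hA : |-y / 16 + 5 * y ^ 2 / 64 + 3 * y ^ 3 / 64 - 9 * y ^ 4 / 256| ≤ 0.7 :=
    abs_le.2 ⟨by linarith, by linarith⟩
  unfold profileN
  generalize -y / 16 + 5 * y ^ 2 / 64 + 3 * y ^ 3 / 64 - 9 * y ^ 4 / 256 = A at *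
  generalize -3 / 64 + 3 * y / 32 - 9 * y ^ 2 / 256 - 3 * y ^ 3 / 64 + y ^ 4 / 32 -
    y ^ 5 / 256 = C at *
  have e : y ^ 2 * (s ^ 2 * A + s ^ 3 * C) = s ^ 2 * (y ^ 2 * (A + s * C)) := by ring
  rw [e, abs_mul, abs_of_nonneg (sq_nonneg s), abs_mul, abs_of_nonneg p2]
  have hAC : |A + s * C| ≤ 0.8 := by
    refine (abs_add_le _ _).trans ?_
    rw [abs_mul, abs_of_nonneg hs]
    nlinarith [abs_nonneg C]
  refine mul_le_mul_of_nonneg_left ?_ (sq_nonneg s)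
  nlinarith [mul_le_mul_of_nonneg_left hAC p2]

section

variable {q y R P : ℝ}

theorem profile_error_front (hq : 0 < q) (hq1 : q ≤ 1 / 1000) (hy0 : 0 ≤ y) (hy : y ≤ 1 / 2)
    (hR : 0 < R) (hRP : R ≤ P) (eR : R ^ 2 = (2 - y) * profileS (q ^ 2) y)
    (eP : P ^ 2 = R ^ 2 + q ^ 2 / 8 * y ^ 3) :
    2 * q ^ 4 * R + q ^ 2 / 4 * |profileG y| * (P - R) + 10 * q ^ 4 * P * profileG y +
      q ^ 3 * profileJ (q ^ 2) y ≤
      30 * q ^ 3 * (y * (2 - y)) * R - 3 * q ^ 4 * R - q ^ 7 * y ^ 2 := by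
  have hs : 0 < q ^ 2 := by positivity
  have hs1 : q ^ 2 ≤ 1 / 1000 := by nlinarith
  have hS : 999 / 1000 * y ≤ profileS (q ^ 2) y := by
    have := le_profileS (y := y) hs.le
    nlinarith [mul_nonneg hs.le hy0]
  have hR2 : 1.48 * y ≤ R ^ 2 := by nlinarith
  have hRy : 1.7 * y ≤ R := by
    refine le_of_abs_le (abs_le_of_sq_le_sq ?_ hR.le)
    nlinarith
  have hPR : 23 * (P - R) ≤ q ^ 2 * y ^ 2 * R := by
    have h1 : 16 * R * (P - R) ≤ q ^ 2 * y ^ 3 := by nlinarith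
    have h2 : q ^ 2 * y ^ 2 * (1.48 * y) ≤ q ^ 2 * y ^ 2 * R ^ 2 := by gcongr
    refine le_of_mul_le_mul_left (a := R) ?_ hR
    nlinarith
  have hG : profileG y ≤ -1.125 := by
    unfold profileG; nlinarith [mul_nonneg hy0 (sub_nonneg.2 hy), sq_nonneg y]
  have hG4 : |profileG y| ≤ 4 := by
    refine abs_le.2 ⟨?_, by linarith⟩
    unfold profileG; nlinarith [mul_nonneg hy0 (sub_nonneg.2 hy), sq_nonneg y]
  have hJ : profileJ (q ^ 2) y ≤ 15 * y ^ 2 + 6 * q ^ 2 * y := by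
    have h1 : y ^ 2 * ((3 - 2 * y) * (5 - 2 * y)) ≤ y ^ 2 * 15 := by
      gcongr; nlinarith
    have h2 : q ^ 2 * y * (6 - 18 * y + 16 * y ^ 2 - 4 * y ^ 3) ≤ q ^ 2 * y * 6 := by
      gcongr
      nlinarith [pow_nonneg hy0 3, mul_nonneg hy0 (sub_nonneg.2 hy)]
    unfold profileJ; linarith
  have t1 : q ^ 2 / 4 * |profileG y| * (P - R) ≤ q ^ 4 * R := by
    calc _ ≤ q ^ 2 / 4 * 4 * (q ^ 2 * y ^ 2 * R) := by
          have : P - R ≤ q ^ 2 * y ^ 2 * R := by nlinarith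
          have : 0 ≤ P - R := by linarith
          gcongr
      _ = q ^ 4 * R * y ^ 2 := by ring
      _ ≤ q ^ 4 * R * 1 := by gcongr; nlinarith
      _ = _ := by ring
  have t2 : 10 * q ^ 4 * P * profileG y ≤ -11 * q ^ 4 * R := by
    have h0 : 0 < P := hR.trans_le hRP
    have h1 : 10 * q ^ 4 * P * profileG y ≤ 10 * q ^ 4 * P * (-1.125) := by gcongr
    have h2 : q ^ 4 * R ≤ q ^ 4 * P := by gcongr
    have h3 : 0 < q ^ 4 * R := by positivity
    linarith
  have t3 : q ^ 3 * profileJ (q ^ 2) y ≤ 15 * q ^ 3 * y ^ 2 + q ^ 4 * R := by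
    have h1 : q ^ 3 * profileJ (q ^ 2) y ≤ q ^ 3 * (15 * y ^ 2 + 6 * q ^ 2 * y) := by gcongr
    have h2 : q ^ 4 * (6 * q * y) ≤ q ^ 4 * R := by
      gcongr; nlinarith
    linarith
  have t4 : 15 * q ^ 3 * y ^ 2 ≤ 30 * q ^ 3 * (y * (2 - y)) * R := by
    calc 15 * q ^ 3 * y ^ 2 ≤ 30 * q ^ 3 * (y * 1) * (1.7 * y) := by
          have : 0 ≤ q ^ 3 * y ^ 2 := by positivity
          linarith
      _ ≤ _ := by
          have : 0 ≤ 2 - y := by linarith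
          gcongr
          linarith
  have t5 : q ^ 7 * y ^ 2 ≤ q ^ 4 * R := by
    calc q ^ 7 * y ^ 2 = q ^ 4 * (q ^ 3 * y * y) := by ring
      _ ≤ q ^ 4 * (1 * 1 * y) := by
          gcongr
          · exact pow_le_one₀ hq.le (by linarith)
          · linarith
      _ ≤ q ^ 4 * R := by gcongr; linarith
  have : 0 < q ^ 4 * R := by positivity
  linarith

theorem profile_error_middle (hq : 0 < q) (hq1 : q ≤ 1 / 1000) (hy : 1 / 2 ≤ y) (hy2 : y ≤ 7 / 4)
    (hR : 0 < R) (hRP : R ≤ P) (hP : P ≤ 1) (eR : R ^ 2 = (2 - y) * profileS (q ^ 2) y)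
    (eP : P ^ 2 = R ^ 2 + q ^ 2 / 8 * y ^ 3) :
    2 * q ^ 4 * R + q ^ 2 / 4 * |profileG y| * (P - R) + 10 * q ^ 4 * P * profileG y +
      q ^ 3 * profileJ (q ^ 2) y ≤
      30 * q ^ 3 * (y * (2 - y)) * R - 3 * q ^ 4 * R - q ^ 7 * y ^ 2 := by
  have hs : 0 < q ^ 2 := by positivity
  have hs1 : q ^ 2 ≤ 1 / 1000000 := by nlinarith
  have hS : 999 / 1000 * y ≤ profileS (q ^ 2) y := by
    have := le_profileS (y := y) hs.le
    nlinarith [mul_nonneg hs.le (by linarith : 0 ≤ y)]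
  have hR34 : 0.34 ≤ R := by
    refine le_of_abs_le (abs_le_of_sq_le_sq ?_ hR.le)
    nlinarith
  have hPR : P - R ≤ 2 * q ^ 2 := by
    have h1 : 0.68 * (P - R) ≤ q ^ 2 / 8 * y ^ 3 := by nlinarith
    have h2 : q ^ 2 / 8 * y ^ 3 ≤ q ^ 2 / 8 * (7 / 4) ^ 3 := by gcongr
    linarith
  have hG4 : |profileG y| ≤ 4 := by
    unfold profileG
    refine abs_le.2 ⟨?_, ?_⟩ <;>
    nlinarith [mul_nonneg (sub_nonneg.2 hy) (sub_nonneg.2 hy2), sq_nonneg y]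
  have hJ : profileJ (q ^ 2) y ≤ 3.5 := by
    have h1 : y ^ 2 * (3 - 2 * y) * (5 - 2 * y) ≤ 3.3 := by
      nlinarith [sq_nonneg (y ^ 2 - 2 * y + 1), sq_nonneg (y - 0.9), sq_nonneg (y ^ 2 - 0.8 * y),
        mul_nonneg (sub_nonneg.2 hy) (sub_nonneg.2 hy2)]
    have h2 : q ^ 2 * (y * (6 - 18 * y + 16 * y ^ 2 - 4 * y ^ 3)) ≤ q ^ 2 * 100 := by
      gcongr
      nlinarith [sq_nonneg (y - 1), sq_nonneg y, sq_nonneg (y ^ 2),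
        mul_nonneg (sub_nonneg.2 hy) (sub_nonneg.2 hy2)]
    unfold profileJ; linarith
  have t0 : q ^ 4 * R ≤ q ^ 4 * 1 := by gcongr; linarith
  have t1 : q ^ 2 / 4 * |profileG y| * (P - R) ≤ 2 * q ^ 4 := by
    calc _ ≤ q ^ 2 / 4 * 4 * (2 * q ^ 2) := by
          have : 0 ≤ P - R := by linarith
          gcongr
      _ = _ := by ring
  have t2 : 10 * q ^ 4 * P * profileG y ≤ 40 * q ^ 4 := by
    have h0 : 0 < P := hR.trans_le hRP
    calc _ ≤ 10 * q ^ 4 * P * 4 := by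
          have := (le_abs_self _).trans hG4
          gcongr
      _ ≤ 10 * q ^ 4 * 1 * 4 := by gcongr
      _ = _ := by ring
  have t3 : q ^ 3 * profileJ (q ^ 2) y ≤ q ^ 3 * 3.5 := by gcongr
  have t4 : 30 * q ^ 3 * 0.43 * 0.34 ≤ 30 * q ^ 3 * (y * (2 - y)) * R := by
    have : 0.43 ≤ y * (2 - y) := by nlinarith
    gcongr
  have t5 : q ^ 7 * y ^ 2 ≤ 4 * q ^ 4 := by
    calc q ^ 7 * y ^ 2 = q ^ 4 * (q ^ 3 * y ^ 2) := by ring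
      _ ≤ q ^ 4 * (1 * 2 ^ 2) := by
          gcongr
          · exact pow_le_one₀ hq.le (by linarith)
          · linarith
      _ = _ := by ring
  have t6 : q ^ 4 ≤ q ^ 3 / 1000 := by
    have : q ^ 3 * q ≤ q ^ 3 * (1 / 1000) := by gcongr
    linarith
  linarith [pow_pos hq 3]

theorem profile_error_back (hq : 0 < q) (hq1 : q ≤ 1 / 1000) (hy : 7 / 4 ≤ y) (hy2 : y ≤ 2)
    (hR : 0 < R) (hRP : R ≤ P) (hP : P ≤ 1)
    (eP : P ^ 2 = R ^ 2 + q ^ 2 / 8 * y ^ 3) :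
    2 * q ^ 4 * R + q ^ 2 / 4 * |profileG y| * (P - R) + 10 * q ^ 4 * P * profileG y +
      q ^ 3 * profileJ (q ^ 2) y ≤
      30 * q ^ 3 * (y * (2 - y)) * R - 3 * q ^ 4 * R - q ^ 7 * y ^ 2 := by
  have hs : 0 < q ^ 2 := by positivity
  have hs1 : q ^ 2 ≤ 1 / 1000000 := by nlinarith
  have hPR : P - R ≤ q := by
    refine le_of_abs_le (abs_le_of_sq_le_sq ?_ hq.le)
    have h2 : q ^ 2 / 8 * y ^ 3 ≤ q ^ 2 / 8 * 2 ^ 3 := by gcongr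
    nlinarith
  have hG4 : |profileG y| ≤ 2 := by
    unfold profileG
    refine abs_le.2 ⟨?_, ?_⟩ <;>
    nlinarith [mul_nonneg (sub_nonneg.2 hy) (sub_nonneg.2 hy2), sq_nonneg y]
  have hJ : profileJ (q ^ 2) y ≤ -1.9 := by
    have h1 : y ^ 2 * ((2 * y - 3) * (5 - 2 * y)) ≥ (7 / 4) ^ 2 * 0.7 := by
      gcongr; nlinarith
    have h2 : q ^ 2 * (y * (6 - 18 * y + 16 * y ^ 2 - 4 * y ^ 3)) ≤ q ^ 2 * 100 := by
      gcongr
      nlinarith [sq_nonneg (y - 1), sq_nonneg y, sq_nonneg (y ^ 2),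
        mul_nonneg (sub_nonneg.2 hy) (sub_nonneg.2 hy2)]
    unfold profileJ; linarith
  have t0 : q ^ 4 * R ≤ q ^ 4 * 1 := by gcongr; linarith
  have t1 : q ^ 2 / 4 * |profileG y| * (P - R) ≤ q ^ 3 / 2 := by
    calc _ ≤ q ^ 2 / 4 * 2 * q := by
          have : 0 ≤ P - R := by linarith
          gcongr
      _ = _ := by ring
  have t2 : 10 * q ^ 4 * P * profileG y ≤ 20 * q ^ 4 := by
    have h0 : 0 < P := hR.trans_le hRP
    calc _ ≤ 10 * q ^ 4 * P * 2 := by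
          have := (le_abs_self _).trans hG4
          gcongr
      _ ≤ 10 * q ^ 4 * 1 * 2 := by gcongr
      _ = _ := by ring
  have t3 : q ^ 3 * profileJ (q ^ 2) y ≤ q ^ 3 * (-1.9) := by gcongr
  have t4 : 0 ≤ 30 * q ^ 3 * (y * (2 - y)) * R := by
    have : 0 ≤ y * (2 - y) := mul_nonneg (by linarith) (by linarith)
    positivity
  have t5 : q ^ 7 * y ^ 2 ≤ 4 * q ^ 4 := by
    calc q ^ 7 * y ^ 2 = q ^ 4 * (q ^ 3 * y ^ 2) := by ring
      _ ≤ q ^ 4 * (1 * 2 ^ 2) := by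
          gcongr
          exact pow_le_one₀ hq.le (by linarith)
      _ = _ := by ring
  have t6 : q ^ 4 ≤ q ^ 3 / 1000 := by
    have : q ^ 3 * q ≤ q ^ 3 * (1 / 1000) := by gcongr
    linarith
  linarith [pow_pos hq 3]

end

theorem profile_error {q y R P : ℝ} (hq : 0 < q) (hq1 : q ≤ 1 / 1000) (hy0 : 0 ≤ y) (hy2 : y ≤ 2)
    (hR : 0 < R) (hRP : R ≤ P) (hP : P ≤ 1) (eR : R ^ 2 = (2 - y) * profileS (q ^ 2) y)
    (eP : P ^ 2 = R ^ 2 + q ^ 2 / 8 * y ^ 3) :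
    2 * q ^ 4 * R + q ^ 2 / 4 * |profileG y| * (P - R) + 10 * q ^ 4 * P * profileG y +
      q ^ 3 * profileJ (q ^ 2) y ≤
      30 * q ^ 3 * (y * (2 - y)) * R - 3 * q ^ 4 * R - q ^ 7 * y ^ 2 := by
  rcases le_total y (1 / 2) with h | h
  · exact profile_error_front hq hq1 hy0 h hR hRP eR eP
  rcases le_total y (7 / 4) with h' | h'
  · exact profile_error_middle hq hq1 h h' hR hRP hP eR eP
  · exact profile_error_back hq hq1 h' hy2 hR hRP hP eP

theorem mul_profile_residual_le {q ψ ε : ℝ} (hq : 0 < q) (hq1 : q ≤ 1 / 1000)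
    (hψ : -1 < cos ψ) (hε : |ε| = 1) :
    ε * (√(profileT (q ^ 2) (cos ψ)) *
        (profileN (q ^ 2) (1 - cos ψ) / profileS (q ^ 2) (1 - cos ψ) ^ 2) +
      q ^ 2 / 4 * profileG (1 - cos ψ) *
        ((1 + ε * (40 * q ^ 2)) * √(1 - (1 - q ^ 2) * cos ψ ^ 2) -
          √(profileT (q ^ 2) (cos ψ))) +
      ε * q ^ 3 * profileJ (q ^ 2) (1 - cos ψ)) ≤
      30 * q ^ 3 * sin ψ ^ 2 * √(profileT (q ^ 2) (cos ψ)) -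
        3 * q ^ 4 * √(profileT (q ^ 2) (cos ψ)) - q ^ 7 * (1 - cos ψ) ^ 2 := by
  have hs : 0 < q ^ 2 := by positivity
  have hs1 : q ^ 2 ≤ 1 / 1000 := by nlinarith
  have hy0 : 0 ≤ 1 - cos ψ := sub_nonneg.2 (cos_le_one ψ)
  have hy2 : 1 - cos ψ ≤ 2 := by linarith
  have hS := profileS_pos hs (by linarith) hy0
  have eT := profileT_eq (q ^ 2) (cos ψ)
  have hT : 0 < profileT (q ^ 2) (cos ψ) := by rw [eT]; exact mul_pos (by linarith) hS
  have hTP : profileT (q ^ 2) (cos ψ) = 1 - (1 - q ^ 2) * cos ψ ^ 2 -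
      q ^ 2 / 8 * (1 - cos ψ) ^ 3 := rfl
  have hy3 : 0 ≤ q ^ 2 / 8 * (1 - cos ψ) ^ 3 := by positivity
  have hRP : √(profileT (q ^ 2) (cos ψ)) ≤ √(1 - (1 - q ^ 2) * cos ψ ^ 2) :=
    Real.sqrt_le_sqrt (by linarith)
  have hP : √(1 - (1 - q ^ 2) * cos ψ ^ 2) ≤ 1 :=
    Real.sqrt_le_one.2 (by nlinarith [sq_nonneg (cos ψ)])
  have h := profile_error hq hq1 hy0 hy2 (Real.sqrt_pos.2 hT) hRP hP
    (by rw [Real.sq_sqrt hT.le, eT]; ring)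
    (by rw [Real.sq_sqrt hT.le, Real.sq_sqrt (by linarith), hTP]; ring)
  have hN : |profileN (q ^ 2) (1 - cos ψ) / profileS (q ^ 2) (1 - cos ψ) ^ 2| ≤ q ^ 4 := by
    rw [abs_div, abs_of_pos (pow_pos hS 2), div_le_iff₀ (pow_pos hS 2)]
    refine (abs_profileN_le hs.le hs1 hy0 hy2).trans_eq ?_
    ring
  have e : sin ψ ^ 2 = (1 - cos ψ) * (2 - (1 - cos ψ)) := by rw [sin_sq]; ring
  rw [e]
  have hR := Real.sqrt_nonneg (profileT (q ^ 2) (cos ψ))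
  generalize √(profileT (q ^ 2) (cos ψ)) = R at *
  generalize √(1 - (1 - q ^ 2) * cos ψ ^ 2) = P at *
  generalize profileN (q ^ 2) (1 - cos ψ) / profileS (q ^ 2) (1 - cos ψ) ^ 2 = n at *
  generalize profileG (1 - cos ψ) = G at *
  have hεε : ε * ε = 1 := by rw [← abs_mul_abs_self, hε, one_mul]
  have h1 : ε * (R * n) ≤ R * q ^ 4 := by
    refine (le_abs_self _).trans ?_
    rw [abs_mul, hε, one_mul, abs_mul, abs_of_nonneg hR]
    gcongr
  have h2 : ε * (q ^ 2 / 4 * G * (P - R)) ≤ q ^ 2 / 4 * |G| * (P - R) := by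
    refine (le_abs_self _).trans ?_
    rw [abs_mul, hε, one_mul, abs_mul, abs_mul, abs_of_nonneg (sub_nonneg.2 hRP),
      abs_of_pos (by positivity : 0 < q ^ 2 / 4)]
  have h3 : 0 ≤ q ^ 4 * R := by positivity
  linear_combination h1 + h2 + h + h3 + (10 * q ^ 4 * P * G +
      q ^ 3 * profileJ (q ^ 2) (1 - cos ψ)) * hεε

theorem abs_profile_sub_le {q ψ κ : ℝ} (a : ℝ) (hq : 0 < q) (hq1 : q ≤ 1 / 1000)
    (hψ : ψ ∈ Icc (-π) π) (hκ : |κ| ≤ 1 / 1000) :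
    |profile (q ^ 2) κ a ψ - (√(profileT (q ^ 2) (cos ψ)) + a * (1 - cos ψ) ^ 2)| ≤
      17 / 10 * q * √(profileT (q ^ 2) (cos ψ)) := by
  have hs : 0 < q ^ 2 := by positivity
  have hs1 : q ^ 2 ≤ 1 / 1000 := by nlinarith
  have hx := cos_le_one ψ
  have hx' := neg_one_le_cos ψ
  have hσ : |sin ψ| ≤ 1.01 * √(profileT (q ^ 2) (cos ψ)) := by
    have h : 0.99 * sin ψ ^ 2 ≤ profileT (q ^ 2) (cos ψ) := by
      rw [profileT_eq, sin_sq]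
      have h1 := le_profileS (y := 1 - cos ψ) hs.le
      have h2 : 0.99 * (1 - cos ψ) ≤ profileS (q ^ 2) (1 - cos ψ) := by nlinarith
      nlinarith
    have hT : 0 ≤ profileT (q ^ 2) (cos ψ) := by nlinarith [sq_nonneg (sin ψ)]
    refine abs_le_of_sq_le_sq ?_ (by positivity)
    rw [mul_pow, Real.sq_sqrt hT]
    linarith
  have hQ := abs_integral_profileW_le hq (by linarith) hψ
  have e : profile (q ^ 2) κ a ψ - (√(profileT (q ^ 2) (cos ψ)) + a * (1 - cos ψ) ^ 2) =
      (1 + κ) * (sin ψ * ∫ t in (0 : ℝ)..ψ, profileW (q ^ 2) t) := by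
    unfold profile; ring
  rw [e, abs_mul, abs_mul]
  have hk : |1 + κ| ≤ 1.001 := by
    refine (abs_add_le _ _).trans ?_
    rw [abs_one]
    linarith
  have hR := Real.sqrt_nonneg (profileT (q ^ 2) (cos ψ))
  calc _ ≤ 1.001 * (1.01 * √(profileT (q ^ 2) (cos ψ)) * (8 / 5 * q)) := by gcongr
    _ ≤ _ := by nlinarith [mul_nonneg hq.le hR]

theorem profile_super_arith {q R B E σ Y : ℝ} (hq : 0 < q) (hq1 : q ≤ 1 / 1000) (hR : 0 ≤ R)
    (hσ : 0 ≤ σ) (hY : 0 ≤ Y) (hB : |B - (R + q ^ 3 * Y)| ≤ 17 / 10 * q * R)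
    (hE : E ≤ 30 * q ^ 3 * σ * R - 3 * q ^ 4 * R - q ^ 7 * Y) :
    3 * q ^ 2 / 4 * σ * R + E ≤
      ((3 / 4 * q ^ 2 + 40 * q ^ 3) * (1 - q ^ 2) * σ - q ^ 4) * B := by
  obtain ⟨h1, h2⟩ := abs_le.1 hB
  have hB1 : R * (1 - 17 / 10 * q) ≤ B := by nlinarith [mul_nonneg (pow_pos hq 3).le hY]
  have hs : 0 < 1 - q ^ 2 := by nlinarith
  have t1 : (3 / 4 * q ^ 2 + 40 * q ^ 3) * (1 - q ^ 2) * σ * (R * (1 - 17 / 10 * q)) ≤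
      (3 / 4 * q ^ 2 + 40 * q ^ 3) * (1 - q ^ 2) * σ * B := by gcongr
  have t2 : q ^ 4 * B ≤ q ^ 4 * (R * (1 + 17 / 10 * q) + q ^ 3 * Y) := by
    gcongr; linarith
  have hk : 3 / 4 * q ^ 2 + 30 * q ^ 3 ≤
      (3 / 4 * q ^ 2 + 40 * q ^ 3) * (1 - q ^ 2) * (1 - 17 / 10 * q) := by
    have h3 : 3 / 4 + 30 * q ≤ (3 / 4 + 40 * q) * (1 - q ^ 2) * (1 - 17 / 10 * q) := by
      have : 1 - 2 * q ≤ (1 - q ^ 2) * (1 - 17 / 10 * q) := by nlinarith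
      nlinarith
    linear_combination q ^ 2 * h3
  have t3 : (3 / 4 * q ^ 2 + 30 * q ^ 3) * (σ * R) ≤
      (3 / 4 * q ^ 2 + 40 * q ^ 3) * (1 - q ^ 2) * (1 - 17 / 10 * q) * (σ * R) := by gcongr
  have t4 : q ^ 4 * (R * (1 + 17 / 10 * q)) ≤ q ^ 4 * (R * 3) := by gcongr; linarith
  linarith

theorem profile_sub_arith {q R B E σ Y : ℝ} (hq : 0 < q) (hq1 : q ≤ 1 / 1000) (hR : 0 ≤ R)
    (hσ : 0 ≤ σ) (hY : 0 ≤ Y) (hB : |B - (R + -q ^ 3 * Y)| ≤ 17 / 10 * q * R)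
    (hE : -E ≤ 30 * q ^ 3 * σ * R - 3 * q ^ 4 * R - q ^ 7 * Y) :
    ((3 / 4 * q ^ 2 - 40 * q ^ 3) * (1 - q ^ 2) * σ + (3 / 4 * q ^ 2 - 40 * q ^ 3) * q ^ 2 +
      q ^ 4) * B ≤ 3 * q ^ 2 / 4 * σ * R + E := by
  obtain ⟨h1, h2⟩ := abs_le.1 hB
  have hB1 : B ≤ R * (1 + 17 / 10 * q) := by nlinarith [mul_nonneg (pow_pos hq 3).le hY]
  have hs : 0 < 1 - q ^ 2 := by nlinarith
  have hδ : 0 ≤ 3 / 4 * q ^ 2 - 40 * q ^ 3 := by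
    have : 0 ≤ q ^ 2 * (3 / 4 - 40 * q) := mul_nonneg (by positivity) (by linarith)
    linarith
  have t1 : ((3 / 4 * q ^ 2 - 40 * q ^ 3) * (1 - q ^ 2) * σ + (3 / 4 * q ^ 2 - 40 * q ^ 3) * q ^ 2 +
      q ^ 4) * B ≤ ((3 / 4 * q ^ 2 - 40 * q ^ 3) * (1 - q ^ 2) * σ +
      (3 / 4 * q ^ 2 - 40 * q ^ 3) * q ^ 2 + q ^ 4) * (R * (1 + 17 / 10 * q)) := by gcongr
  have hk : (3 / 4 * q ^ 2 - 40 * q ^ 3) * (1 - q ^ 2) * (1 + 17 / 10 * q) ≤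
      3 / 4 * q ^ 2 - 30 * q ^ 3 := by
    have h4 : (3 / 4 * q ^ 2 - 40 * q ^ 3) * (1 + 17 / 10 * q) * (1 - q ^ 2) ≤
      (3 / 4 * q ^ 2 - 40 * q ^ 3) * (1 + 17 / 10 * q) * 1 := by
      gcongr
      linarith [sq_nonneg q]
    linarith [pow_pos hq 3, pow_pos hq 4]
  have t3 : (3 / 4 * q ^ 2 - 40 * q ^ 3) * (1 - q ^ 2) * (1 + 17 / 10 * q) * (σ * R) ≤
      (3 / 4 * q ^ 2 - 30 * q ^ 3) * (σ * R) := by gcongr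
  have t4 : ((3 / 4 * q ^ 2 - 40 * q ^ 3) * q ^ 2 + q ^ 4) * (R * (1 + 17 / 10 * q)) ≤
      q ^ 4 * (R * 3) := by
    have h5 : (3 / 4 * q ^ 2 - 40 * q ^ 3) * q ^ 2 + q ^ 4 ≤ 7 / 4 * q ^ 4 := by
      linarith [pow_pos hq 5]
    calc _ ≤ 7 / 4 * q ^ 4 * (R * (1 + 1 / 100)) := by gcongr; linarith
      _ ≤ _ := by linarith [mul_nonneg (pow_pos hq 4).le hR]
  have t5 : 0 ≤ q ^ 7 * Y := by positivity
  linarith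

theorem neg_one_lt_cos_of_mem_Ioo {t : ℝ} (ht : t ∈ Ioo (-π) π) : -1 < cos t := by
  rw [← cos_abs t, ← cos_pi]
  exact cos_lt_cos_of_nonneg_of_le_pi (abs_nonneg t) le_rfl (abs_lt.2 ht)

theorem ConalEigenfunction.two_sub_le {q lam : ℝ} {f : ℝ → ℝ → ℝ} (hq : 0 < q)
    (hq1 : q ≤ 1 / 1000) (hf : ConalEigenfunction (q ^ 2) (1 - q ^ 2) lam f) :
    2 - (3 / 4 * q ^ 2 + 40 * q ^ 3) ≤ lam := by
  have hs : 0 < q ^ 2 := by positivity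
  have hs1 : q ^ 2 ≤ 1 / 1000000 := by nlinarith
  have hκ : |40 * q ^ 2| ≤ 1 / 1000 := by rw [abs_of_pos (by positivity)]; linarith
  refine hf.le_of_supersolution hs (by linarith) (by linarith) (by ring)
    (lam' := 2 - (3 / 4 * q ^ 2 + 40 * q ^ 3)) (σ₀ := q ^ 4)
    (B := profile (q ^ 2) (40 * q ^ 2) (q ^ 3)) (by linarith [pow_pos hq 3]) (by positivity)
    (continuous_profile hs (by linarith) _ _).continuousOn ?_ ?_
  · intro ψ hψ
    have h := (abs_le.1 (abs_profile_sub_le (q ^ 3) hq hq1 hψ hκ)).1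
    rcases (cos_le_one ψ).eq_or_lt with hx | hx
    · have hT : profileT (q ^ 2) (cos ψ) = q ^ 2 := by rw [hx]; unfold profileT; ring
      rw [hT, Real.sqrt_sq hq.le, hx] at h
      nlinarith
    · have hR := Real.sqrt_nonneg (profileT (q ^ 2) (cos ψ))
      have : 0 < q ^ 3 * (1 - cos ψ) ^ 2 := by have := sub_pos.2 hx; positivity
      nlinarith
  · intro ψ hψ
    have hx : -1 < cos ψ := neg_one_lt_cos_of_mem_Ioo hψ
    obtain ⟨B₁, B₂, hB, e⟩ :=
      exists_secondDeriv_profile hs (by linarith) (40 * q ^ 2) (q ^ 3) hx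
    refine ⟨B₁, B₂, hB, ?_⟩
    have hE := mul_profile_residual_le (ε := 1) hq hq1 hx abs_one
    have h := profile_super_arith hq hq1 (Real.sqrt_nonneg _) (sq_nonneg (sin ψ))
      (sq_nonneg (1 - cos ψ)) (abs_profile_sub_le (q ^ 3) hq hq1 (Ioo_subset_Icc_self hψ) hκ)
      (by simpa only [one_mul] using hE)
    rw [e]
    linear_combination h

theorem ConalEigenfunction.le_two_sub {q lam : ℝ} {f : ℝ → ℝ → ℝ} (hq : 0 < q)
    (hq1 : q ≤ 1 / 1000) (hf : ConalEigenfunction (q ^ 2) (1 - q ^ 2) lam f) :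
    lam ≤ 2 - (3 / 4 * q ^ 2 - 40 * q ^ 3) := by
  have hs : 0 < q ^ 2 := by positivity
  have hs1 : q ^ 2 ≤ 1 / 1000000 := by nlinarith
  have hκ : |-(40 * q ^ 2)| ≤ 1 / 1000 := by rw [abs_neg, abs_of_pos (by positivity)]; linarith
  have hT : profileT (q ^ 2) (-1) = 0 := by unfold profileT; ring
  refine hf.ge_of_subsolution hs (by linarith) (by linarith) (by ring)
    (lam' := 2 - (3 / 4 * q ^ 2 - 40 * q ^ 3)) (σ₀ := q ^ 4)
    (B := profile (q ^ 2) (-(40 * q ^ 2)) (-q ^ 3)) (by nlinarith [mul_pos hs hq]) (by positivity)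
    (continuous_profile hs (by linarith) _ _).continuousOn ?_ ?_ ?_ ?_
  · simp only [profile, cos_neg, cos_pi, sin_neg, sin_pi, hT, Real.sqrt_zero]
    nlinarith [pow_pos hq 3]
  · simp only [profile, cos_pi, sin_pi, hT, Real.sqrt_zero]
    nlinarith [pow_pos hq 3]
  · simpa [profile, profileT] using hs
  · intro ψ hψ _
    have hx : -1 < cos ψ := neg_one_lt_cos_of_mem_Ioo hψ
    obtain ⟨B₁, B₂, hB, e⟩ :=
      exists_secondDeriv_profile hs (by linarith) (-(40 * q ^ 2)) (-q ^ 3) hx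
    refine ⟨B₁, B₂, hB, ?_⟩
    have hE := mul_profile_residual_le (ε := -1) hq hq1 hx (by simp)
    have h := profile_sub_arith hq hq1 (Real.sqrt_nonneg _) (sq_nonneg (sin ψ))
      (sq_nonneg (1 - cos ψ)) (abs_profile_sub_le (-q ^ 3) hq hq1 (Ioo_subset_Icc_self hψ) hκ)
      (by simpa only [neg_mul, one_mul] using hE)
    rw [e]
    linear_combination h

/-- A homogeneous positive harmonic function in the slit domain is an eigenfunction in conal
coordinates. -/
theorem conalEigenfunction_of_harmonic {Θ β : ℝ} {u : Ed 3 → ℝ} (h0 : 0 < cos Θ)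
    (hs : sin Θ ≠ 0) (hcont : Continuous u) (hpos : ∀ x ∈ slitV Θ, 0 < u x)
    (hzero : ∀ x, x ∉ slitV Θ → u x = 0) (hdiff : ContDiffOn ℝ 2 u (slitV Θ))
    (hlap : ∀ x ∈ slitV Θ, lapE 3 u x = 0)
    (hhom : ∀ r : ℝ, 0 < r → ∀ x : Ed 3, x ≠ 0 → u (r • x) = r ^ β * u x) :
    ConalEigenfunction (sin Θ ^ 2) (cos Θ ^ 2) (β * (β + 1))
      fun φ ψ => u (WithLp.toLp 2 (conalX (sin Θ ^ 2) (cos Θ ^ 2) φ ψ)) where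
  continuous := hcont.comp (continuous_conalX _ _)
  pos φ hφ ψ hψ := hpos _ (conalX_mem_slitV h0 hs hφ hψ)
  eq_zero_left := funext fun ψ => hzero _ (conalX_notMem_slitV h0 (Or.inl sin_zero))
  eq_zero_right := funext fun ψ => hzero _ (conalX_notMem_slitV h0 (Or.inl sin_pi))
  eq_zero_bot φ := hzero _ (conalX_notMem_slitV h0 (Or.inr (by rw [cos_neg, cos_pi])))
  eq_zero_top φ := hzero _ (conalX_notMem_slitV h0 (Or.inr cos_pi))
  equation φ hφ ψ hψ := by
    have hX := conalX_mem_slitV h0 hs hφ hψ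
    have tΘ := sin_sq_add_cos_sq Θ
    have hs2 : 0 < sin Θ ^ 2 := by positivity
    have hc2 : 0 < cos Θ ^ 2 := by positivity
    refine conal_equation tΘ ?_ ?_ (hdiff.contDiffAt ((isOpen_slitV Θ).mem_nhds hX)) (hlap _ hX)
      fun r hr => hhom r hr _ ?_
    · nlinarith [cos_sq_le_one φ]
    · nlinarith [cos_sq_le_one ψ]
    · rintro h
      rw [h] at hX
      simp [slitV] at hX

theorem abs_sub_le_of_abs_quadratic_le {q z : ℝ} (hq : 0 < q) (hq1 : q ≤ 1 / 1000) (hz : z < 1)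
    (h : |z * (3 - z) - 3 / 4 * q ^ 2| ≤ 40 * q ^ 3) : |z - q ^ 2 / 4| ≤ 14 * q ^ 3 := by
  obtain ⟨h1, h2⟩ := abs_le.1 h
  have h3 : 40 * q ^ 3 ≤ q ^ 2 / 4 := by
    have : q ^ 2 * (40 * q) ≤ q ^ 2 * (1 / 4) := by gcongr; linarith
    linarith
  have hz0 : 0 ≤ z := by
    by_contra! hz0
    nlinarith [sq_nonneg q]
  have hz1 : z ≤ q ^ 2 / 2 := by nlinarith
  have hz2 : z ^ 2 ≤ q ^ 3 := by
    calc z ^ 2 ≤ (q ^ 2 / 2) ^ 2 := by gcongr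
      _ = q ^ 3 * (q / 4) := by ring
      _ ≤ q ^ 3 * 1 := by gcongr; linarith
      _ = q ^ 3 := mul_one _
  have hq3 := pow_pos hq 3
  have hz3 := sq_nonneg z
  exact abs_le.2 ⟨by linarith, by linarith⟩

/-- homogeneity exponent for the classical Laplacian in the complement of a
plane slit by a cone. -/
theorem slit_plane_exponent :
    ∃ C : ℝ, 0 < C ∧ ∃ Θ₀ ∈ Set.Ioo (0 : ℝ) π, ∀ Θ ∈ Set.Ioo (0 : ℝ) Θ₀,
      ∀ β : ℝ, ∀ u : Ed 3 → ℝ, Continuous u → (∀ x, 0 ≤ u x) → (∃ x, u x ≠ 0) →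
        (∀ x, x ∉ slitV Θ → u x = 0) →
        ContDiffOn ℝ 2 u (slitV Θ) →
        (∀ x ∈ slitV Θ, lapE 3 u x = 0) →
        (∀ r : ℝ, 0 < r → ∀ x : Ed 3, x ≠ 0 → u (r • x) = r ^ β * u x) →
        |β - 1 + Θ ^ 2 / 4| ≤ C * Θ ^ 3 * |Real.log Θ| := by
  refine ⟨15, by norm_num, 1 / 1000, ⟨by norm_num, by linarith [pi_gt_three]⟩, ?_⟩
  rintro Θ ⟨hΘ, hΘ1⟩ β u hcont hnonneg ⟨x, hx⟩ hzero hdiff hlap hhom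
  have hq : 0 < sin Θ := sin_pos_of_pos_of_lt_pi hΘ (by linarith [pi_gt_three])
  have hqΘ : sin Θ ≤ Θ := sin_le hΘ.le
  have hΘq : Θ - Θ ^ 3 / 6 < sin Θ := sin_gt_sub_cube hΘ
  have hq1 : sin Θ ≤ 1 / 1000 := by linarith
  have hc : 0 < cos Θ := cos_pos_of_mem_Ioo ⟨by linarith [pi_gt_three], by linarith [pi_gt_three]⟩
  have hc1 : cos Θ < 1 := by nlinarith [sin_sq_add_cos_sq Θ]
  have hxV : x ∈ slitV Θ := by
    by_contra h
    exact hx (hzero x h)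
  have hpos := pos_of_harmonic (isOpen_slitV Θ) (isPreconnected_slitV hc.le hc1) hcont hnonneg
    hdiff hlap hxV ((hnonneg x).lt_of_ne' hx)
  have hβ := homogeneity_exponent_pos hcont (hzero 0 (by simp [slitV])) hx hhom
  have hf := conalEigenfunction_of_harmonic hc hq.ne' hcont hpos hzero hdiff hlap hhom
  rw [cos_sq'] at hf
  have hz := abs_sub_le_of_abs_quadratic_le (z := 1 - β) hq hq1 (by linarith)
    (abs_le.2 ⟨by linarith [hf.le_two_sub hq hq1], by linarith [hf.two_sub_le hq hq1]⟩)
  obtain ⟨hz1, hz2⟩ := abs_le.1 hz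
  have hsin3 : sin Θ ^ 3 ≤ Θ ^ 3 := by gcongr
  have hsin2 : sin Θ ^ 2 ≤ Θ ^ 2 := by gcongr
  have hsin2' : Θ ^ 2 - sin Θ ^ 2 ≤ Θ ^ 3 := by
    have h : (Θ - sin Θ) * (Θ + sin Θ) ≤ Θ ^ 3 * 1 := by
      gcongr
      · linarith [pow_pos hΘ 3]
      · linarith
    linarith
  have hlog : 1 ≤ |Real.log Θ| := by
    rw [le_abs']
    left
    rw [Real.log_le_iff_le_exp hΘ]
    linarith [Real.exp_neg_one_gt_d9]
  have hΘ3 := pow_pos hΘ 3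
  calc |β - 1 + Θ ^ 2 / 4| ≤ 15 * Θ ^ 3 * 1 := abs_le.2 ⟨by linarith, by linarith⟩
    _ ≤ 15 * Θ ^ 3 * |Real.log Θ| := by gcongr
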